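/- arXiv:1709.05025 — 2 statements merged into one kernel-verified Lean document; each statement's English description precedes it below -/
import Mathlib

section
/- The subgroup ⟨σ, φ⟩ of GL(3,ℂ) equals ⟨K, λ₁₂, ε⟩ where K = ⟨σ, ρ⟩, ε = (σφ⁴)³ = diag(ζ₅, ζ₅, ζ₅), and it is the internal direct product of the four subgroups S(2,1), ⟨diag(1,1,i)⟩, ⟨diag(1,1,ω)⟩ and ⟨diag(ζ₅, ζ₅, ζ₅)⟩; in particular it is isomorphic to SL(2,5) × ℤ/4 × ℤ/3 × ℤ/5. -/
noncomputable section
open Matrix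

def zeta5 : ℂ := Complex.exp (2 * Real.pi * Complex.I / 5)

def sqrt5 : ℂ := zeta5 - zeta5 ^ 2 - zeta5 ^ 3 + zeta5 ^ 4

def alpha : Matrix (Fin 2) (Fin 2) ℂ := -(Matrix.of ![![zeta5 ^ 3, 0], ![0, zeta5 ^ 2]])
def beta : Matrix (Fin 2) (Fin 2) ℂ := Matrix.of ![![0, 1], ![-1, 0]]
def gamma : Matrix (Fin 2) (Fin 2) ℂ :=
  (zeta5 ^ 2 - zeta5 ^ 3)⁻¹ •
    Matrix.of ![![zeta5 + zeta5⁻¹, 1], ![1, -(zeta5 + zeta5⁻¹)]]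

/-- The block-diagonal embedding of a `2 × 2` matrix into `GL(3)`, with last diagonal entry 1. -/
def emb (A : Matrix (Fin 2) (Fin 2) ℂ) : Matrix (Fin 3) (Fin 3) ℂ :=
  Matrix.of ![![A 0 0, A 0 1, 0], ![A 1 0, A 1 1, 0], ![0, 0, 1]]

def alpha' : Matrix (Fin 3) (Fin 3) ℂ := emb alpha
def beta' : Matrix (Fin 3) (Fin 3) ℂ := emb beta
def gamma' : Matrix (Fin 3) (Fin 3) ℂ := emb gamma

def sigma : Matrix (Fin 3) (Fin 3) ℂ :=
  Matrix.of ![![(zeta5 - zeta5 ^ 4) / sqrt5, (zeta5 ^ 3 - zeta5 ^ 2) / sqrt5, 0],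
    ![(zeta5 ^ 3 - zeta5 ^ 2) / sqrt5, -((zeta5 - zeta5 ^ 4) / sqrt5), 0],
    ![0, 0, 1]]

def tau : Matrix (Fin 3) (Fin 3) ℂ := Matrix.diagonal ![zeta5, 1, 1]

def rho : Matrix (Fin 3) (Fin 3) ℂ := Matrix.diagonal ![zeta5 ^ 3, zeta5 ^ 2, 1]

/-- The subgroup of `GL(3, ℂ)` generated by the invertible matrices in `S`. -/
def gen3 (S : Set (Matrix (Fin 3) (Fin 3) ℂ)) : Subgroup (GL (Fin 3) ℂ) :=
  Subgroup.closure {g : GL (Fin 3) ℂ | (g : Matrix (Fin 3) (Fin 3) ℂ) ∈ S}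

/-- `S(2,1) = ⟨α', β', γ'⟩`. -/
def S21 : Subgroup (GL (Fin 3) ℂ) := gen3 {alpha', beta', gamma'}

abbrev SL25 := Matrix.SpecialLinearGroup (Fin 2) (ZMod 5)

def xi : ℂ := Complex.exp (2 * Real.pi * Complex.I / 60)

def omega : ℂ := Complex.exp (2 * Real.pi * Complex.I / 3)

/-- `φ = diag(ζ₅, 1, ξ)` with `ξ¹² = ζ₅`. -/
def phi : Matrix (Fin 3) (Fin 3) ℂ := Matrix.diagonal ![zeta5, 1, xi]

def lambda12 : Matrix (Fin 3) (Fin 3) ℂ :=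
  Matrix.diagonal ![1, 1, Complex.exp (2 * Real.pi * Complex.I / 12)]

/-- `K = ⟨σ, ρ⟩`. -/
def K : Subgroup (GL (Fin 3) ℂ) := gen3 {sigma, rho}

/-- The cyclic subgroup generated by `diag(1, 1, i)`. -/
def Ci : Subgroup (GL (Fin 3) ℂ) := gen3 {Matrix.diagonal ![1, 1, Complex.I]}

/-- The cyclic subgroup generated by `diag(1, 1, ω)`. -/
def Cw : Subgroup (GL (Fin 3) ℂ) := gen3 {Matrix.diagonal ![1, 1, omega]}

/-- The cyclic subgroup generated by `ε = diag(ζ₅, ζ₅, ζ₅)`. -/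
def E : Subgroup (GL (Fin 3) ℂ) := gen3 {Matrix.diagonal ![zeta5, zeta5, zeta5]}

/-!
The element `c = ρ⁻¹ φ = diag(ζ₅³, ζ₅³, ξ)` commutes with all block matrices and has order 60. The
group `S(2,1) = K` is the image of the odd part of the Weil representation of `SL(2, 5)`: the
matrices `σ`, `β'` and `ρ` satisfy the Bruhat relations. By these relations every element has a
Bruhat normal form, so two groups generated by such elements are isomorphic as soon as the normal
form of `1` is unique in both. Over a finite field this uniqueness only requires the unipotent and
the diagonal elements to be faithfully represented and a unit `b` with `b² ≠ 1`.

The braid relation gives `(σ φ⁴)³ = c¹²`, and `φ⁵ = c⁵`. As 5 and 12 are coprime, `⟨σ, φ⟩` contains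
`c`, hence equals `S(2,1) ⟨c⟩`. The determinant is trivial on `S(2,1)` and injective on `⟨c⟩`, so
the product is direct, and `⟨c⟩ = ⟨c¹⁵⟩ × ⟨c²⁰⟩ × ⟨c¹²⟩` by the Chinese remainder theorem.
-/

/-- The relations of the Bruhat presentation of `SL(2, F)`, realised in a group `G`: `u t`, `h a`
and `w` stand for `!![1, t; 0, 1]`, `!![a, 0; 0, a⁻¹]` and `!![0, -1; 1, 0]`. It is used to compare
the subgroups of different groups that are generated by such elements. -/
structure BruhatData (F G : Type*) [Field F] [Group G] where
  u : AddChar F G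
  h : Fˣ →* G
  w : G
  h_mul_u : ∀ (a : Fˣ) (t : F), h a * u t = u (a ^ 2 * t) * h a
  w_mul_h : ∀ a : Fˣ, w * h a = h a⁻¹ * w
  w_mul_w : w * w = h (-1)
  w_mul_u_mul_w : ∀ t : Fˣ, w * u t * w = u (-t⁻¹ : Fˣ) * w * h t * u (-t⁻¹ : Fˣ)

namespace BruhatData

variable {F G H : Type*} [Field F] [Group G] [Group H]

/-- The subgroup generated by the `u t` and `w`; it contains the `h a`, see `h_mem_subgroup`. -/
def subgroup (d : BruhatData F G) : Subgroup G :=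
  Subgroup.closure (insert d.w (Set.range d.u))

lemma w_mem_subgroup (d : BruhatData F G) : d.w ∈ d.subgroup :=
  Subgroup.subset_closure (Set.mem_insert _ _)

lemma u_mem_subgroup (d : BruhatData F G) (t : F) : d.u t ∈ d.subgroup :=
  Subgroup.subset_closure (Set.mem_insert_of_mem _ (Set.mem_range_self t))

lemma h_mem_subgroup (d : BruhatData F G) (a : Fˣ) : d.h a ∈ d.subgroup := by
  have key : d.h a = (d.u (-a⁻¹ : Fˣ) * d.w)⁻¹ * (d.w * d.u a * d.w) * (d.u (-a⁻¹ : Fˣ))⁻¹ := by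
    rw [d.w_mul_u_mul_w]
    group
  have hw := d.w_mem_subgroup
  rw [key]
  exact mul_mem (mul_mem (inv_mem (mul_mem (d.u_mem_subgroup _) hw))
    (mul_mem (mul_mem hw (d.u_mem_subgroup _)) hw)) (inv_mem (d.u_mem_subgroup _))

lemma u_mul_u (d : BruhatData F G) (s t : F) : d.u s * d.u t = d.u (s + t) :=
  (d.u.map_add_eq_mul s t).symm

/-- The elements of `G` admitting a Bruhat decomposition. -/
inductive IsNormalForm (d : BruhatData F G) : G → Prop
  | borel (t : F) (a : Fˣ) : IsNormalForm d (d.u t * d.h a)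
  | bigCell (s : F) (a : Fˣ) (t : F) : IsNormalForm d (d.u s * d.w * d.h a * d.u t)

lemma IsNormalForm.mul_u {d : BruhatData F G} {g : G} (hg : d.IsNormalForm g) (t : F) :
    d.IsNormalForm (g * d.u t) := by
  cases hg with
  | borel s a =>
    rw [mul_assoc, d.h_mul_u, ← mul_assoc, d.u_mul_u]
    exact .borel _ _
  | bigCell r a s =>
    rw [mul_assoc, d.u_mul_u]
    exact .bigCell _ _ _

lemma bigCell_mul_w (d : BruhatData F G) (s : F) (a t : Fˣ) :
    d.u s * d.w * d.h a * d.u t * d.w =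
      d.u (s + a⁻¹ ^ 2 * (-t⁻¹)) * d.w * d.h (a * t) * d.u (-t⁻¹ : Fˣ) :=
  calc d.u s * d.w * d.h a * d.u t * d.w
      = d.u s * (d.w * d.h a) * (d.u t * d.w) := by group
    _ = d.u s * d.h a⁻¹ * (d.w * d.u t * d.w) := by rw [d.w_mul_h]; group
    _ = d.u s * (d.h a⁻¹ * d.u (-t⁻¹ : Fˣ)) * d.w * d.h t * d.u (-t⁻¹ : Fˣ) := by
      rw [d.w_mul_u_mul_w]; group
    _ = d.u s * d.u (a⁻¹ ^ 2 * (-t⁻¹)) * (d.h a⁻¹ * d.w) * d.h t * d.u (-t⁻¹ : Fˣ) := by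
      rw [d.h_mul_u]; push_cast; group
    _ = _ := by rw [d.u_mul_u, ← d.w_mul_h, map_mul]; group

lemma IsNormalForm.mul_w {d : BruhatData F G} {g : G} (hg : d.IsNormalForm g) :
    d.IsNormalForm (g * d.w) := by
  cases hg with
  | borel t a =>
    have key : d.u t * d.h a * d.w = d.u t * d.w * d.h a⁻¹ * d.u 0 := by
      rw [AddChar.map_zero_eq_one, mul_one, mul_assoc, mul_assoc, d.w_mul_h, inv_inv]
    exact key ▸ .bigCell _ _ _
  | bigCell s a t =>
    obtain rfl | ht := eq_or_ne t 0
    · have key : d.u s * d.w * d.h a * d.u 0 * d.w = d.u s * d.h (a⁻¹ * -1) := by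
        rw [AddChar.map_zero_eq_one, mul_one, mul_assoc (d.u s), d.w_mul_h, map_mul, ← d.w_mul_w]
        group
      exact key ▸ .borel _ _
    · exact d.bigCell_mul_w s a (.mk0 t ht) ▸ .bigCell _ _ _

lemma w_pow_four (d : BruhatData F G) : d.w ^ 4 = 1 := by
  rw [pow_mul d.w 2 2, pow_two d.w, d.w_mul_w, ← map_pow, neg_one_sq, map_one]

lemma isNormalForm_of_mem_subgroup (d : BruhatData F G) {g : G} (hg : g ∈ d.subgroup) :
    d.IsNormalForm g := by
  induction hg using Subgroup.closure_induction_right with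
  | one => simpa using IsNormalForm.borel (d := d) 0 1
  | mul_right x _ y hy hx =>
    obtain rfl | ⟨t, rfl⟩ := hy
    exacts [hx.mul_w, hx.mul_u t]
  | mul_inv_cancel x _ y hy hx =>
    obtain rfl | ⟨t, rfl⟩ := hy
    · have hw : d.w⁻¹ = d.w * d.w * d.w := by
        rw [inv_eq_iff_mul_eq_one, ← d.w_pow_four]
        simp only [pow_succ, pow_zero, one_mul, mul_assoc]
      rw [hw, ← mul_assoc, ← mul_assoc]
      exact hx.mul_w.mul_w.mul_w
    · rw [← AddChar.map_neg_eq_inv]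
      exact hx.mul_u _

lemma w_mul_u_neg_one_pow_three (d : BruhatData F G) : (d.w * d.u (-1)) ^ 3 = 1 := by
  have braid : d.w * d.u (-1) * d.w = d.u 1 * d.w * (d.w * d.w) * d.u 1 := by
    simpa [d.w_mul_w] using d.w_mul_u_mul_w (-1)
  calc
    (d.w * d.u (-1)) ^ 3 = d.w * d.u (-1) * d.w * d.u (-1) * d.w * d.u (-1) := by
      simp only [pow_succ, pow_zero, one_mul, mul_assoc]
    _ = d.u 1 * d.w ^ 3 * (d.u 1 * d.u (-1)) * d.w * d.u (-1) := by
      rw [braid]; simp only [pow_succ, pow_zero, one_mul, mul_assoc]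
    _ = d.u 1 * d.w ^ 4 * d.u (-1) := by
      rw [d.u_mul_u, add_neg_cancel, AddChar.map_zero_eq_one]
      simp only [pow_succ, pow_zero, one_mul, mul_one, mul_assoc]
    _ = 1 := by rw [d.w_pow_four, mul_one, d.u_mul_u, add_neg_cancel, AddChar.map_zero_eq_one]

/-- The image of Bruhat data under a group homomorphism. -/
@[simps u h w]
def map (d : BruhatData F G) (f : G →* H) : BruhatData F H where
  u := f.compAddChar d.u
  h := f.comp d.h
  w := f d.w
  h_mul_u a t := by simp [← map_mul, d.h_mul_u]
  w_mul_h a := by simp only [MonoidHom.comp_apply, ← map_mul, d.w_mul_h]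
  w_mul_w := by simp only [MonoidHom.comp_apply, ← map_mul, d.w_mul_w]
  w_mul_u_mul_w t := by
    simp only [MonoidHom.comp_apply, MonoidHom.compAddChar_apply, Function.comp_apply, ← map_mul,
      d.w_mul_u_mul_w]

lemma subgroup_map (d : BruhatData F G) (f : G →* H) :
    (d.map f).subgroup = d.subgroup.map f := by
  rw [subgroup, subgroup, MonoidHom.map_closure, Set.image_insert_eq, ← Set.range_comp]
  rfl

/-- Bruhat data in a product of groups, with the given components. -/
def prod (d : BruhatData F G) (d' : BruhatData F H) : BruhatData F (G × H) where
  u := ⟨fun t ↦ (d.u t, d'.u t), by simp, by simp [AddChar.map_add_eq_mul]⟩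
  h := d.h.prod d'.h
  w := (d.w, d'.w)
  h_mul_u a t := Prod.ext (d.h_mul_u a t) (d'.h_mul_u a t)
  w_mul_h a := Prod.ext (d.w_mul_h a) (d'.w_mul_h a)
  w_mul_w := Prod.ext d.w_mul_w d'.w_mul_w
  w_mul_u_mul_w t := Prod.ext (d.w_mul_u_mul_w t) (d'.w_mul_u_mul_w t)

/-- Uniqueness of the Bruhat decomposition of `1`. As relations can only shrink the group, this
makes `d.subgroup` the largest possible one. -/
structure Faithful (d : BruhatData F G) : Prop where
  eq_one_of_borel : ∀ (t : F) (a : Fˣ), d.u t * d.h a = 1 → t = 0 ∧ a = 1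
  bigCell_ne_one : ∀ (s : F) (a : Fˣ) (t : F), d.u s * d.w * d.h a * d.u t ≠ 1

lemma Faithful.map {d : BruhatData F G} (hd : d.Faithful) {f : G →* H}
    (hf : Function.Injective f) : (d.map f).Faithful where
  eq_one_of_borel t a hta := hd.eq_one_of_borel t a <| hf <| by simpa using hta
  bigCell_ne_one s a t hsat := hd.bigCell_ne_one s a t <| hf <| by simpa using hsat

lemma injective_of_faithful_map {d : BruhatData F G} {f : G →* H} (hd : (d.map f).Faithful) :
    Function.Injective (f.subgroupMap d.subgroup) := by
  rw [injective_iff_map_eq_one]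
  rintro ⟨g, hg⟩ hfg
  have hfg : f g = 1 := congr_arg Subtype.val hfg
  rw [Subgroup.mk_eq_one]
  cases d.isNormalForm_of_mem_subgroup hg with
  | borel t a =>
    obtain ⟨rfl, rfl⟩ := hd.eq_one_of_borel t a (by simpa using hfg)
    simp
  | bigCell s a t => exact absurd (by simpa using hfg) (hd.bigCell_ne_one s a t)

/-- A homomorphism carrying `d` to faithful data is an isomorphism between the subgroups. -/
def subgroupEquivMap (d : BruhatData F G) {f : G →* H} (hd : (d.map f).Faithful) :
    d.subgroup ≃* (d.map f).subgroup :=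
  (MulEquiv.ofBijective (f.subgroupMap d.subgroup)
    ⟨injective_of_faithful_map hd, f.subgroupMap_surjective d.subgroup⟩).trans
    (MulEquiv.subgroupCongr (d.subgroup_map f).symm)

/-- Faithful Bruhat data over the same field generate isomorphic subgroups. -/
def subgroupEquiv {d : BruhatData F G} {d' : BruhatData F H} (hd : d.Faithful)
    (hd' : d'.Faithful) : d.subgroup ≃* d'.subgroup :=
  -- `(d.prod d').subgroup` is the graph of the isomorphism.
  ((d.prod d').subgroupEquivMap (f := .fst G H) hd).symm.trans
    ((d.prod d').subgroupEquivMap (f := .snd G H) hd')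

lemma u_mul_h_eq_one_iff [Finite F] {d : BruhatData F G} (hu : Function.Injective d.u)
    (hh : Function.Injective d.h) {t : F} {a : Fˣ} : d.u t * d.h a = 1 ↔ t = 0 ∧ a = 1 := by
  refine ⟨fun hta ↦ ?_, by rintro ⟨rfl, rfl⟩; simp⟩
  have := Fintype.ofFinite F
  classical
  have h_eq : d.h a = d.u (-t) := by
    rw [AddChar.map_neg_eq_inv, eq_inv_of_mul_eq_one_right hta]
  -- `h a = u (-t)` has order dividing both `q - 1` and `q`, where `q` is the cardinality of `F`.
  have h_pred : d.h a ^ (Fintype.card F - 1) = 1 := by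
    rw [← Fintype.card_units, ← map_pow, pow_card_eq_one, map_one]
  have h_card : d.h a ^ Fintype.card F = 1 := by
    rw [h_eq, ← AddChar.map_nsmul_eq_pow, card_nsmul_eq_zero, AddChar.map_zero_eq_one]
  have h_one : d.h a = 1 := by
    rwa [← Nat.sub_add_cancel Fintype.card_pos, pow_succ, h_pred, one_mul] at h_card
  refine ⟨neg_eq_zero.mp (hu ?_), hh (h_one.trans d.h.map_one.symm)⟩
  rw [← h_eq, h_one, AddChar.map_zero_eq_one]

lemma w_ne_u_mul_h [Finite F] {d : BruhatData F G} (hu : Function.Injective d.u)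
    (hh : Function.Injective d.h) {b : Fˣ} (hb : b ^ 2 ≠ 1) (t : F) (a : Fˣ) :
    d.w ≠ d.u t * d.h a := by
  -- Conjugation by `w` inverts `h b`, whereas `h a` commutes with it.
  intro hw
  have h_conj : d.w * (d.h b)⁻¹ = d.h b * d.w := by simpa using d.w_mul_h b⁻¹
  have h_comm : d.h a * d.h b = d.h b * d.h a := by rw [← map_mul, mul_comm, map_mul]
  have h_one : d.u (-t + b ^ 2 * t) * d.h (b ^ 2) = 1 := by
    calc d.u (-t + b ^ 2 * t) * d.h (b ^ 2)
        = (d.u t)⁻¹ * (d.h b * d.u t) * d.h b := by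
          rw [d.h_mul_u, ← d.u_mul_u, AddChar.map_neg_eq_inv, pow_two b, map_mul d.h]
          simp only [mul_assoc]
      _ = (d.u t)⁻¹ * (d.h b * d.w) * (d.h a)⁻¹ * d.h b := by rw [hw]; group
      _ = d.h a * (d.h b)⁻¹ * (d.h a)⁻¹ * d.h b := by rw [← h_conj, hw]; group
      _ = d.h a * (d.h a * d.h b)⁻¹ * d.h b := by group
      _ = 1 := by rw [h_comm]; group
  exact hb ((u_mul_h_eq_one_iff hu hh).mp h_one).2

lemma faithful_of_finite [Finite F] {d : BruhatData F G} (hu : Function.Injective d.u)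
    (hh : Function.Injective d.h) {b : Fˣ} (hb : b ^ 2 ≠ 1) : d.Faithful where
  eq_one_of_borel _ _ hta := (u_mul_h_eq_one_iff hu hh).mp hta
  bigCell_ne_one s a t h := by
    refine w_ne_u_mul_h hu hh hb (-s + -t) a⁻¹ ?_
    calc d.w = (d.u s)⁻¹ * (d.u s * d.w * d.h a * d.u t) * (d.u t)⁻¹ * (d.h a)⁻¹ := by group
      _ = d.u (-s + -t) * d.h a⁻¹ := by
        rw [h, mul_one, ← d.u_mul_u, map_inv, AddChar.map_neg_eq_inv, AddChar.map_neg_eq_inv]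

section Generator

variable {u : AddChar F G} {h : Fˣ →* G} {w : G} {g : Fˣ}

lemma h_mul_u_of_generator (hg : ∀ a, a ∈ Submonoid.powers g)
    (h_mul_u : ∀ t, h g * u t = u (g ^ 2 * t) * h g) (a : Fˣ) (t : F) :
    h a * u t = u (a ^ 2 * t) * h a := by
  obtain ⟨n, rfl⟩ := hg a
  beta_reduce
  induction n generalizing t with
  | zero => simp
  | succ n ih =>
    rw [pow_succ, map_mul, mul_assoc, h_mul_u, ← mul_assoc, ih, mul_assoc]
    push_cast
    ring_nf

lemma w_mul_h_of_generator (hg : ∀ a, a ∈ Submonoid.powers g)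
    (w_mul_h : w * h g = h g⁻¹ * w) (a : Fˣ) : w * h a = h a⁻¹ * w := by
  obtain ⟨n, rfl⟩ := hg a
  rw [map_pow, map_inv, map_pow, ← inv_pow, ← map_inv]
  exact SemiconjBy.pow_right w_mul_h n

lemma w_mul_u_mul_w_sq_mul (h_mul_u : ∀ (a : Fˣ) (t : F), h a * u t = u (a ^ 2 * t) * h a)
    (w_mul_h : ∀ a : Fˣ, w * h a = h a⁻¹ * w) {t : Fˣ}
    (ht : w * u t * w = u (-t⁻¹ : Fˣ) * w * h t * u (-t⁻¹ : Fˣ)) (a : Fˣ) :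
    w * u (a ^ 2 * t : Fˣ) * w =
      u (-(a ^ 2 * t)⁻¹ : Fˣ) * w * h (a ^ 2 * t) * u (-(a ^ 2 * t)⁻¹ : Fˣ) := by
  have h_conj (b s : Fˣ) : h b * u s * h b⁻¹ = u (b ^ 2 * s : Fˣ) := by
    rw [h_mul_u, mul_assoc, ← map_mul, mul_inv_cancel, map_one, mul_one]
    norm_cast
  have h_inv : -(a ^ 2 * t)⁻¹ = a⁻¹ ^ 2 * -t⁻¹ := by rw [mul_inv, inv_pow, mul_neg]
  calc w * u (a ^ 2 * t : Fˣ) * w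
      = w * h a * u t * (h a⁻¹ * w) := by rw [← h_conj]; group
    _ = h a⁻¹ * w * u t * (w * h a) := by rw [← w_mul_h]
    _ = h a⁻¹ * (w * u t * w) * h a := by group
    _ = h a⁻¹ * u (-t⁻¹ : Fˣ) * h a⁻¹⁻¹ * (h a⁻¹ * w) * h t * h a *
          (h a⁻¹ * u (-t⁻¹ : Fˣ) * h a⁻¹⁻¹) := by
      rw [ht, inv_inv, map_inv]; group
    _ = u (-(a ^ 2 * t)⁻¹ : Fˣ) * w * (h a * h t * h a) * u (-(a ^ 2 * t)⁻¹ : Fˣ) := by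
      rw [h_conj, ← h_inv, ← w_mul_h]; group
    _ = _ := by rw [← map_mul, ← map_mul, mul_right_comm a t a, ← pow_two]

/-- Bruhat data from relations that only involve a generator `g` of `Fˣ`. The last relation is
needed at `1` and `g`, which represent the units modulo squares. -/
def ofGenerator (u : AddChar F G) (h : Fˣ →* G) (w : G) (hg : ∀ a, a ∈ Submonoid.powers g)
    (h_mul_u : ∀ t, h g * u t = u (g ^ 2 * t) * h g) (w_mul_h : w * h g = h g⁻¹ * w)
    (w_mul_w : w * w = h (-1)) (w_mul_u_one_mul_w : w * u 1 * w = u (-1) * w * u (-1))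
    (w_mul_u_mul_w : w * u g * w = u (-g⁻¹ : Fˣ) * w * h g * u (-g⁻¹ : Fˣ)) :
    BruhatData F G where
  u := u
  h := h
  w := w
  h_mul_u := h_mul_u_of_generator hg h_mul_u
  w_mul_h := w_mul_h_of_generator hg w_mul_h
  w_mul_w := w_mul_w
  w_mul_u_mul_w t := by
    have h_mul_u := h_mul_u_of_generator hg h_mul_u
    have w_mul_h := w_mul_h_of_generator hg w_mul_h
    obtain ⟨n, rfl⟩ := hg t
    obtain ⟨k, rfl | rfl⟩ := n.even_or_odd'
    · have h_one := w_mul_u_mul_w_sq_mul h_mul_u w_mul_h (t := 1) (by simpa) (g ^ k)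
      simpa only [mul_one, ← pow_mul, mul_comm k] using h_one
    · have h_gen := w_mul_u_mul_w_sq_mul h_mul_u w_mul_h w_mul_u_mul_w (g ^ k)
      simpa only [pow_succ (g : Fˣ) (2 * k), pow_mul'] using h_gen

end Generator

section SpecialLinearGroup

variable (F) in
/-- The one-parameter subgroup of upper unitriangular matrices in `SL(2, F)`. -/
def unipotent : AddChar F (SpecialLinearGroup (Fin 2) F) where
  toFun t := ⟨!![1, t; 0, 1], by simp⟩
  map_zero_eq_one' := Subtype.ext Matrix.one_fin_two.symm
  map_add_eq_mul' s t := Subtype.ext <|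
    show !![1, s + t; 0, 1] = !![1, s; 0, 1] * !![1, t; 0, 1] by simp [add_comm]

variable (F) in
/-- The diagonal torus of `SL(2, F)`. -/
def torus : Fˣ →* SpecialLinearGroup (Fin 2) F where
  toFun a := ⟨!![(a : F), 0; 0, (a : F)⁻¹], by simp⟩
  map_one' := Subtype.ext <|
    show !![((1 : Fˣ) : F), 0; 0, ((1 : Fˣ) : F)⁻¹] = 1 by simp [Matrix.one_fin_two]
  map_mul' a b := Subtype.ext <|
    show !![((a * b : Fˣ) : F), 0; 0, ((a * b : Fˣ) : F)⁻¹] =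
        !![(a : F), 0; 0, (a : F)⁻¹] * !![(b : F), 0; 0, (b : F)⁻¹] by simp [mul_comm]

variable (F) in
/-- The representative of the nontrivial Weyl group element in `SL(2, F)`. -/
def weyl : SpecialLinearGroup (Fin 2) F := ⟨!![0, -1; 1, 0], by simp⟩

@[simp]
lemma coe_unipotent (t : F) : (unipotent F t : Matrix (Fin 2) (Fin 2) F) = !![1, t; 0, 1] := rfl

@[simp]
lemma coe_torus (a : Fˣ) :
    (torus F a : Matrix (Fin 2) (Fin 2) F) = !![(a : F), 0; 0, (a : F)⁻¹] := rfl

@[simp]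
lemma coe_weyl : (weyl F : Matrix (Fin 2) (Fin 2) F) = !![0, -1; 1, 0] := rfl

variable (F) in
/-- The standard Bruhat data of `SL(2, F)`, the model for `BruhatData`. -/
@[simps]
def specialLinearGroup : BruhatData F (SpecialLinearGroup (Fin 2) F) where
  u := unipotent F
  h := torus F
  w := weyl F
  h_mul_u a t := Subtype.ext <| by simp [pow_two, mul_right_comm _ t]
  w_mul_h a := Subtype.ext <| by simp [-map_inv]
  w_mul_w := Subtype.ext <| by simp
  w_mul_u_mul_w t := Subtype.ext <| by simp

lemma specialLinearGroup_faithful : (specialLinearGroup F).Faithful where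
  eq_one_of_borel t a hta := by
    have hta : !![(a : F), t * (a : F)⁻¹; 0, (a : F)⁻¹] = !![1, 0; 0, 1] := by
      simpa [Matrix.one_fin_two] using congr_arg Subtype.val hta
    simp_all
  bigCell_ne_one s a t h := by
    have h10 := congr_fun₂ (congr_arg Subtype.val h) 1 0
    simp at h10

lemma exists_eq_unipotent_mul_torus {g : SpecialLinearGroup (Fin 2) F} (hg : g 1 0 = 0) :
    ∃ t a, g = unipotent F t * torus F a := by
  obtain ⟨a, b, ha, rfl⟩ := g.fin_two_exists_eq_mk_of_apply_zero_one_eq_zero hg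
  refine ⟨a * b, .mk0 a ha, Subtype.ext ?_⟩
  simp [mul_right_comm a b, ha]

lemma exists_eq_bigCell {g : SpecialLinearGroup (Fin 2) F} (hg : g 1 0 ≠ 0) :
    ∃ s a t, g = unipotent F s * weyl F * torus F a * unipotent F t := by
  refine ⟨g 0 0 / g 1 0, .mk0 _ hg, g 1 1 / g 1 0, Subtype.ext ?_⟩
  have hdet : g 0 0 * g 1 1 - g 0 1 * g 1 0 = 1 := g.1.det_fin_two ▸ g.2
  have h01 : g 0 1 = g 0 0 * (g 1 1 / g 1 0) + -(g 1 0)⁻¹ := by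
    field_simp
    linear_combination -hdet
  conv_lhs => rw [g.1.eta_fin_two, h01]
  simp [hg, mul_div_cancel₀]

lemma specialLinearGroup_subgroup : (specialLinearGroup F).subgroup = ⊤ := by
  rw [eq_top_iff]
  intro g _
  have hu := (specialLinearGroup F).u_mem_subgroup
  have hh := (specialLinearGroup F).h_mem_subgroup
  have hw := (specialLinearGroup F).w_mem_subgroup
  by_cases hg : g 1 0 = 0
  · obtain ⟨t, a, rfl⟩ := exists_eq_unipotent_mul_torus hg
    exact mul_mem (hu t) (hh a)
  · obtain ⟨s, a, t, rfl⟩ := exists_eq_bigCell hg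
    exact mul_mem (mul_mem (mul_mem (hu s) hw) (hh a)) (hu t)

end SpecialLinearGroup

lemma subgroup_eq_closure_pair {p : ℕ} [Fact p.Prime] (d : BruhatData (ZMod p) G) :
    d.subgroup = Subgroup.closure {d.w, d.u 1} := by
  apply le_antisymm
  · rw [subgroup, Subgroup.closure_le, Set.insert_subset_iff, Set.range_subset_iff]
    refine ⟨Subgroup.subset_closure (Set.mem_insert _ _), fun t ↦ ?_⟩
    have hu : d.u t = d.u 1 ^ t.val := by
      simpa using d.u.map_nsmul_eq_pow t.val 1
    rw [hu]
    exact pow_mem (Subgroup.subset_closure (by simp)) _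
  · rw [Subgroup.closure_le, Set.pair_subset_iff]
    exact ⟨d.w_mem_subgroup, d.u_mem_subgroup 1⟩

end BruhatData

section RootsOfUnity

lemma isPrimitiveRoot_xi : IsPrimitiveRoot xi 60 := by
  simpa [xi] using Complex.isPrimitiveRoot_exp 60 (by norm_num)

lemma isPrimitiveRoot_zeta5 : IsPrimitiveRoot zeta5 5 := by
  simpa [zeta5] using Complex.isPrimitiveRoot_exp 5 (by norm_num)

lemma xi_pow_twelve : xi ^ 12 = zeta5 := by
  rw [zeta5, xi, ← Complex.exp_nat_mul]; congr 1; push_cast; ring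

lemma xi_pow_five : xi ^ 5 = Complex.exp (2 * Real.pi * Complex.I / 12) := by
  rw [xi, ← Complex.exp_nat_mul]; congr 1; push_cast; ring

lemma xi_pow_twenty : xi ^ 20 = omega := by
  rw [omega, xi, ← Complex.exp_nat_mul]; congr 1; push_cast; ring

lemma xi_pow_fifteen : xi ^ 15 = Complex.I := by
  rw [xi, ← Complex.exp_nat_mul]
  refine .trans ?_ Complex.exp_pi_div_two_mul_I
  congr 1; push_cast; ring

lemma zeta5_pow_five : zeta5 ^ 5 = 1 := isPrimitiveRoot_zeta5.pow_eq_one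

lemma zeta5_ne_zero : zeta5 ≠ 0 := isPrimitiveRoot_zeta5.ne_zero (by norm_num)

lemma zeta5_sum : 1 + zeta5 + zeta5 ^ 2 + zeta5 ^ 3 + zeta5 ^ 4 = 0 := by
  simpa [Finset.sum_range_succ] using isPrimitiveRoot_zeta5.geom_sum_eq_zero (by norm_num)

lemma sqrt5_sq : sqrt5 ^ 2 = 5 := by
  have := zeta5_sum
  grind [sqrt5, zeta5_pow_five]

lemma sqrt5_ne_zero : sqrt5 ≠ 0 := by
  intro h
  simpa [h] using sqrt5_sq

end RootsOfUnity

-- Only a local instance: through `ZMod.instField`, a global one would change the addition that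
-- `Multiplicative (ZMod 5)` finds.
lemma fact_prime_five : Fact (Nat.Prime 5) := ⟨Nat.prime_five⟩

namespace Weil

attribute [local instance] fact_prime_five

/-- The generator `2` of `(ZMod 5)ˣ`, whose torus element is `β`. -/
def unitTwo : (ZMod 5)ˣ := ⟨2, 3, by decide, by decide⟩

lemma orderOf_unitTwo : orderOf unitTwo = 4 :=
  orderOf_eq_prime_pow (p := 2) (n := 1) (by decide) (by decide)

lemma mem_powers_unitTwo (a : (ZMod 5)ˣ) : a ∈ Submonoid.powers unitTwo := by
  have h_top : Subgroup.zpowers unitTwo = ⊤ := by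
    apply Subgroup.eq_top_of_card_eq
    rw [Nat.card_zpowers, orderOf_unitTwo, Nat.card_eq_fintype_card, ZMod.card_units]
  rw [mem_powers_iff_mem_zpowers, h_top]
  trivial

lemma isPrimitiveRoot_unit :
    IsPrimitiveRoot (Units.mk0 zeta5 zeta5_ne_zero ^ 3) 5 :=
  (IsPrimitiveRoot.coe_units_iff.mp isPrimitiveRoot_zeta5).pow_of_coprime 3 (by decide)

/-- The upper left block of `ρ ^ t`. -/
def unipotent : AddChar (ZMod 5) (SpecialLinearGroup (Fin 2) ℂ) :=
  (BruhatData.torus ℂ).compAddChar (AddChar.zmodChar 5 isPrimitiveRoot_unit.pow_eq_one)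

lemma coe_unipotent (t : ZMod 5) :
    (unipotent t : Matrix (Fin 2) (Fin 2) ℂ) =
      !![zeta5 ^ (3 * t.val), 0; 0, zeta5 ^ (2 * t.val)] := by
  have h_inv : (zeta5 ^ (3 * t.val))⁻¹ = zeta5 ^ (2 * t.val) := by
    apply inv_eq_of_mul_eq_one_right
    rw [← pow_add, ← add_mul, pow_mul, zeta5_pow_five, one_pow]
  simp [unipotent, AddChar.zmodChar_apply, ← pow_mul, -map_pow, h_inv]

lemma unipotent_injective : Function.Injective unipotent := by
  intro s t hst
  have h00 : zeta5 ^ (3 * s.val) = zeta5 ^ (3 * t.val) := by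
    simpa [coe_unipotent] using congr_arg (fun g : SpecialLinearGroup (Fin 2) ℂ ↦ g 0 0) hst
  simp only [pow_mul] at h00
  exact ZMod.val_injective 5 <|
    (isPrimitiveRoot_zeta5.pow_of_coprime 3 (by decide)).pow_inj s.val_lt t.val_lt h00

/-- The upper left block of `β'`. -/
def betaBlock : SpecialLinearGroup (Fin 2) ℂ := (BruhatData.weyl ℂ)⁻¹

lemma coe_betaBlock : (betaBlock : Matrix (Fin 2) (Fin 2) ℂ) = beta := by
  simp [betaBlock, beta]

lemma betaBlock_sq : betaBlock ^ 2 = -1 := Subtype.ext <| by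
  simp [betaBlock, pow_two, Matrix.one_fin_two]

lemma orderOf_betaBlock : orderOf betaBlock = 4 := by
  refine orderOf_eq_prime_pow (p := 2) (n := 1) (fun h ↦ ?_) ?_
  · have h00 := congr_fun₂ (congr_arg Subtype.val (betaBlock_sq.symm.trans h)) 0 0
    norm_num at h00
  · rw [pow_succ, pow_mul, pow_one, betaBlock_sq, neg_one_sq]

lemma mem_zpowers_unitTwo (a : (ZMod 5)ˣ) : a ∈ Subgroup.zpowers unitTwo :=
  mem_powers_iff_mem_zpowers.mp (mem_powers_unitTwo a)

/-- The upper left blocks of the `h a` of `S(2,1)`: the homomorphism sending the generator `2` of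
`(ZMod 5)ˣ` to `β`. -/
def torus : (ZMod 5)ˣ →* SpecialLinearGroup (Fin 2) ℂ :=
  monoidHomOfForallMemZpowers mem_zpowers_unitTwo
    (orderOf_betaBlock.trans orderOf_unitTwo.symm).dvd

lemma torus_unitTwo : torus unitTwo = betaBlock := monoidHomOfForallMemZpowers_apply_gen _ _

lemma torus_injective : Function.Injective torus := by
  refine (injective_iff_map_eq_one torus).mpr fun a ha ↦ ?_
  obtain ⟨n, rfl⟩ := mem_zpowers_unitTwo a
  simp only [map_zpow, torus_unitTwo] at ha ⊢
  rwa [← orderOf_dvd_iff_zpow_eq_one, orderOf_unitTwo, ← orderOf_betaBlock,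
    orderOf_dvd_iff_zpow_eq_one]

lemma sigma_zero_zero :
    (zeta5 - zeta5 ^ 4) / sqrt5 = (zeta5 + 2 * zeta5 ^ 2 - 2 * zeta5 ^ 3 - zeta5 ^ 4) / 5 := by
  rw [div_eq_iff sqrt5_ne_zero]
  grind [sqrt5, zeta5_pow_five]

lemma sigma_zero_one :
    (zeta5 ^ 3 - zeta5 ^ 2) / sqrt5 = (2 * zeta5 ^ 4 - zeta5 ^ 3 + zeta5 ^ 2 - 2 * zeta5) / 5 := by
  rw [div_eq_iff sqrt5_ne_zero]
  grind [sqrt5, zeta5_pow_five]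

/-- The upper left block of `σ`. -/
def sigmaBlock : SpecialLinearGroup (Fin 2) ℂ :=
  ⟨!![(zeta5 - zeta5 ^ 4) / sqrt5, (zeta5 ^ 3 - zeta5 ^ 2) / sqrt5;
      (zeta5 ^ 3 - zeta5 ^ 2) / sqrt5, -((zeta5 - zeta5 ^ 4) / sqrt5)], by
    rw [det_fin_two_of, sigma_zero_zero, sigma_zero_one]
    grind [zeta5_pow_five, zeta5_sum]⟩

lemma coe_sigmaBlock :
    (sigmaBlock : Matrix (Fin 2) (Fin 2) ℂ) =
      !![(zeta5 + 2 * zeta5 ^ 2 - 2 * zeta5 ^ 3 - zeta5 ^ 4) / 5,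
          (2 * zeta5 ^ 4 - zeta5 ^ 3 + zeta5 ^ 2 - 2 * zeta5) / 5;
        (2 * zeta5 ^ 4 - zeta5 ^ 3 + zeta5 ^ 2 - 2 * zeta5) / 5,
          -((zeta5 + 2 * zeta5 ^ 2 - 2 * zeta5 ^ 3 - zeta5 ^ 4) / 5)] := by
  rw [← sigma_zero_zero, ← sigma_zero_one]
  rfl

lemma betaBlock_mul_unipotent (t : ZMod 5) :
    betaBlock * unipotent t = unipotent (-t) * betaBlock := by
  have h_weyl : SemiconjBy (BruhatData.weyl ℂ) (unipotent t) (unipotent t)⁻¹ := by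
    rw [SemiconjBy, unipotent, MonoidHom.compAddChar_apply, Function.comp_apply, ← map_inv]
    exact (BruhatData.specialLinearGroup ℂ).w_mul_h _
  have h_inv : SemiconjBy betaBlock (unipotent t)⁻¹⁻¹ (unipotent t)⁻¹ :=
    h_weyl.inv_symm_left.inv_right
  rw [AddChar.map_neg_eq_inv]
  rwa [inv_inv] at h_inv

lemma sigmaBlock_mul_betaBlock : sigmaBlock * betaBlock = betaBlock⁻¹ * sigmaBlock :=
  Subtype.ext <| by simp [coe_betaBlock, coe_sigmaBlock, beta, adjugate_fin_two]

lemma sigmaBlock_mul_self : sigmaBlock * sigmaBlock = betaBlock ^ 2 := by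
  apply Subtype.ext
  rw [betaBlock_sq]
  simp only [Matrix.SpecialLinearGroup.coe_mul, SpecialLinearGroup.coe_neg,
    Matrix.SpecialLinearGroup.coe_one, coe_sigmaBlock, mul_fin_two, one_fin_two, neg_of, neg_cons,
    neg_empty, EmbeddingLike.apply_eq_iff_eq, vecCons_inj, and_true]
  grind [zeta5_pow_five, zeta5_sum]

lemma sigmaBlock_mul_unipotent_one_mul_sigmaBlock :
    sigmaBlock * unipotent 1 * sigmaBlock = unipotent (-1) * sigmaBlock * unipotent (-1) := by
  apply Subtype.ext
  simp only [Matrix.SpecialLinearGroup.coe_mul, coe_sigmaBlock, coe_unipotent, ZMod.val_one,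
    ZMod.val_neg_one, mul_fin_two, EmbeddingLike.apply_eq_iff_eq, vecCons_inj, and_true]
  grind [zeta5_pow_five, zeta5_sum]

lemma sigmaBlock_mul_unipotent_two_mul_sigmaBlock :
    sigmaBlock * unipotent 2 * sigmaBlock =
      unipotent 2 * sigmaBlock * betaBlock * unipotent 2 := by
  have h_val : (2 : ZMod 5).val = 2 := rfl
  apply Subtype.ext
  simp only [Matrix.SpecialLinearGroup.coe_mul, coe_sigmaBlock, coe_unipotent, coe_betaBlock, beta,
    h_val, mul_fin_two, EmbeddingLike.apply_eq_iff_eq, vecCons_inj, and_true]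
  grind [zeta5_pow_five, zeta5_sum]

/-- The odd part of the Weil representation of `SL(2, 5)`, given by its Bruhat data. -/
def bruhatData : BruhatData (ZMod 5) (SpecialLinearGroup (Fin 2) ℂ) :=
  .ofGenerator unipotent torus sigmaBlock mem_powers_unitTwo
    (fun t ↦ by
      have h_sq : (unitTwo ^ 2 : ZMod 5) = -1 := by decide
      rw [torus_unitTwo, h_sq, neg_one_mul, betaBlock_mul_unipotent])
    (by rw [map_inv, torus_unitTwo, sigmaBlock_mul_betaBlock])
    (by
      have h_sq : unitTwo ^ 2 = -1 := by decide
      rw [← h_sq, map_pow, torus_unitTwo, sigmaBlock_mul_self])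
    sigmaBlock_mul_unipotent_one_mul_sigmaBlock
    (by
      have h_inv : -unitTwo⁻¹ = unitTwo := by decide
      rw [torus_unitTwo, h_inv]
      exact sigmaBlock_mul_unipotent_two_mul_sigmaBlock)

lemma bruhatData_faithful : bruhatData.Faithful := by
  have h_sq : unitTwo ^ 2 ≠ 1 := by decide
  exact BruhatData.faithful_of_finite unipotent_injective torus_injective h_sq

end Weil

section Group

variable {G A : Type*} [Group G] [CommGroup A]

lemma zpowers_pow_le_zpowers (g : G) (n : ℕ) :
    Subgroup.zpowers (g ^ n) ≤ Subgroup.zpowers g :=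
  Subgroup.zpowers_le.mpr (pow_mem (Subgroup.mem_zpowers _) n)

lemma zpowers_pow_sup_zpowers_pow (g : G) (m n : ℕ) :
    Subgroup.zpowers (g ^ m) ⊔ Subgroup.zpowers (g ^ n) = Subgroup.zpowers (g ^ m.gcd n) := by
  have h_le {a b : ℕ} (hab : b ∣ a) : Subgroup.zpowers (g ^ a) ≤ Subgroup.zpowers (g ^ b) := by
    obtain ⟨k, rfl⟩ := hab
    rw [pow_mul]
    exact zpowers_pow_le_zpowers _ k
  refine le_antisymm (sup_le (h_le (m.gcd_dvd_left n)) (h_le (m.gcd_dvd_right n))) ?_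
  have h_bezout : g ^ m.gcd n = (g ^ m) ^ m.gcdA n * (g ^ n) ^ m.gcdB n := by
    rw [← zpow_natCast g (m.gcd n), Nat.gcd_eq_gcd_ab, _root_.zpow_add, _root_.zpow_mul,
      _root_.zpow_mul, zpow_natCast, zpow_natCast]
  rw [Subgroup.zpowers_le, h_bezout]
  exact Subgroup.mul_mem_sup (zpow_mem (Subgroup.mem_zpowers _) _)
    (zpow_mem (Subgroup.mem_zpowers _) _)

/-- The Chinese remainder theorem for cyclic groups, written multiplicatively. -/
def zmodMulEquivProd {m n : ℕ} (h : m.Coprime n) :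
    Multiplicative (ZMod (m * n)) ≃* Multiplicative (ZMod m) × Multiplicative (ZMod n) :=
  (ZMod.chineseRemainder h).toAddEquiv.toMultiplicative.trans (MulEquiv.prodMultiplicative _ _)

lemma commute_of_mem_zpowers {c a b : G} (ha : a ∈ Subgroup.zpowers c)
    (hb : b ∈ Subgroup.zpowers c) : Commute a b := by
  obtain ⟨m, rfl⟩ := ha
  obtain ⟨n, rfl⟩ := hb
  exact Commute.zpow_zpow_self c m n

lemma inf_zpowers_eq_bot {χ : G →* A} {T : Subgroup G} {k : G} {m : ℕ} (hT : T ≤ (χ ^ m).ker)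
    (hk : orderOf (χ k) = orderOf k) (hm : (orderOf k).Coprime m) :
    T ⊓ Subgroup.zpowers k = ⊥ := by
  rw [eq_bot_iff]
  rintro _ ⟨hxT, n, rfl⟩
  have h_pow : χ k ^ (n * m) = 1 := by
    rw [_root_.zpow_mul, zpow_natCast, ← map_zpow]
    exact hT hxT
  rw [← orderOf_dvd_iff_zpow_eq_one, hk] at h_pow
  have h_dvd : (orderOf k : ℤ) ∣ n :=
    (Nat.isCoprime_iff_coprime.mpr hm).dvd_of_dvd_mul_right h_pow
  exact Subgroup.mem_bot.mpr (orderOf_dvd_iff_zpow_eq_one.mp h_dvd)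

/-- The join of two disjoint commuting subgroups is their internal direct product. -/
def supEquivProd {S T : Subgroup G} (h_comm : ∀ a ∈ S, ∀ b ∈ T, Commute a b)
    (h_disj : Disjoint S T) : (S ⊔ T : Subgroup G) ≃* S × T :=
  have comm (a : S) (b : T) : Commute (S.subtype a) (T.subtype b) := h_comm a a.2 b b.2
  have inj : Function.Injective (S.subtype.noncommCoprod T.subtype comm) := by
    rw [MonoidHom.noncommCoprod_injective]
    simpa using h_disj
  (MulEquiv.subgroupCongr <| by
    rw [MonoidHom.noncommCoprod_range, Subgroup.range_subtype, Subgroup.range_subtype]).trans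
    (MonoidHom.ofInjective inj).symm

/-- The cyclic subgroup generated by an element of order `n`, as a copy of `ℤ/n`. -/
def zpowersEquivZMod {c : G} {n : ℕ} (hc : orderOf c = n) :
    Subgroup.zpowers c ≃* Multiplicative (ZMod n) :=
  mulEquivOfCyclicCardEq <| by
    rw [Nat.card_zpowers, hc, Nat.card_congr Multiplicative.toAdd, Nat.card_zmod]

end Group

section MatrixGenerators

variable (a b c : GL (Fin 3) ℂ)

lemma gen3_image (T : Set (GL (Fin 3) ℂ)) :
    gen3 ((fun g : GL (Fin 3) ℂ ↦ (g : Matrix (Fin 3) (Fin 3) ℂ)) '' T) = Subgroup.closure T :=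
  congr_arg Subgroup.closure (Set.preimage_image_eq T Units.val_injective)

lemma gen3_singleton : gen3 {(a : Matrix (Fin 3) (Fin 3) ℂ)} = Subgroup.zpowers a := by
  rw [Subgroup.zpowers_eq_closure, ← gen3_image, Set.image_singleton]

lemma gen3_pair :
    gen3 {(a : Matrix (Fin 3) (Fin 3) ℂ), (b : Matrix (Fin 3) (Fin 3) ℂ)} =
      Subgroup.closure {a, b} := by
  rw [← gen3_image, Set.image_pair]

lemma gen3_triple :
    gen3 {(a : Matrix (Fin 3) (Fin 3) ℂ), (b : Matrix (Fin 3) (Fin 3) ℂ),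
      (c : Matrix (Fin 3) (Fin 3) ℂ)} = Subgroup.closure {a, b, c} := by
  rw [← gen3_image, Set.image_insert_eq, Set.image_pair]

end MatrixGenerators

section BlockEmbedding

lemma emb_one : emb 1 = 1 := by
  ext i j
  fin_cases i <;> fin_cases j <;> simp [emb]

lemma emb_mul (A B : Matrix (Fin 2) (Fin 2) ℂ) : emb (A * B) = emb A * emb B := by
  ext i j
  fin_cases i <;> fin_cases j <;> simp [emb, Matrix.mul_apply, Fin.sum_univ_succ]

lemma emb_injective : Function.Injective emb := by
  intro A B h
  ext i j
  have hij := congr_fun₂ h i.castSucc j.castSucc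
  fin_cases i <;> fin_cases j <;> simpa [emb] using hij

lemma det_emb (A : Matrix (Fin 2) (Fin 2) ℂ) : (emb A).det = A.det := by
  simp [emb, Matrix.det_fin_three, Matrix.det_fin_two]

/-- The block embedding of `SL(2, ℂ)` into `GL(3, ℂ)`, whose range contains `S(2,1)`. -/
def blockHom : SpecialLinearGroup (Fin 2) ℂ →* GL (Fin 3) ℂ :=
  (Units.map ⟨⟨emb, emb_one⟩, emb_mul⟩).comp SpecialLinearGroup.toGL

lemma coe_blockHom (A : SpecialLinearGroup (Fin 2) ℂ) :
    (blockHom A : Matrix (Fin 3) (Fin 3) ℂ) = emb A := rfl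

lemma blockHom_injective : Function.Injective blockHom := fun _ _ h ↦
  Subtype.ext (emb_injective (congr_arg Units.val h))

lemma det_blockHom (A : SpecialLinearGroup (Fin 2) ℂ) :
    GeneralLinearGroup.det (blockHom A) = 1 :=
  Units.ext <| (det_emb A).trans A.det_coe

end BlockEmbedding

section IcosahedralSubgroup

attribute [local instance] fact_prime_five

/-- The Bruhat data of `S(2,1)`: the Weil representation, embedded in `GL(3, ℂ)`. -/
def blockData : BruhatData (ZMod 5) (GL (Fin 3) ℂ) := Weil.bruhatData.map blockHom

lemma blockData_faithful : blockData.Faithful := Weil.bruhatData_faithful.map blockHom_injective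

lemma coe_blockData_w : (blockData.w : Matrix (Fin 3) (Fin 3) ℂ) = sigma := rfl

lemma coe_blockData_u_one : (blockData.u 1 : Matrix (Fin 3) (Fin 3) ℂ) = rho := by
  change emb (Weil.unipotent 1 : Matrix (Fin 2) (Fin 2) ℂ) = rho
  rw [Weil.coe_unipotent, rho]
  ext i j
  fin_cases i <;> fin_cases j <;> simp [emb, ZMod.val_one]

lemma blockData_h_unitTwo : blockData.h Weil.unitTwo = blockHom Weil.betaBlock :=
  congr_arg blockHom Weil.torus_unitTwo

lemma coe_blockData_h_unitTwo :
    (blockData.h Weil.unitTwo : Matrix (Fin 3) (Fin 3) ℂ) = beta' := by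
  rw [blockData_h_unitTwo, coe_blockHom, Weil.coe_betaBlock, beta']

lemma blockHom_betaBlock_sq_mul_unipotent_one :
    blockHom (Weil.betaBlock ^ 2 * Weil.unipotent 1) = alpha' := by
  rw [coe_blockHom, Weil.betaBlock_sq, alpha', alpha]
  simp [Weil.coe_unipotent, ZMod.val_one]

lemma zeta5_sq_sub_zeta5_cube_ne_zero : zeta5 ^ 2 - zeta5 ^ 3 ≠ 0 :=
  sub_ne_zero.mpr fun h ↦ absurd
    (isPrimitiveRoot_zeta5.pow_inj (i := 2) (j := 3) (by norm_num) (by norm_num) h) (by norm_num)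

lemma blockHom_betaBlock_mul_sigmaBlock :
    blockHom (Weil.betaBlock * Weil.sigmaBlock) = gamma' := by
  have h_inv : zeta5⁻¹ = zeta5 ^ 4 :=
    inv_eq_of_mul_eq_one_right ((pow_succ' zeta5 4).symm.trans zeta5_pow_five)
  rw [coe_blockHom, gamma', gamma]
  congr 1
  rw [eq_inv_smul_iff₀ zeta5_sq_sub_zeta5_cube_ne_zero, h_inv]
  simp only [Matrix.SpecialLinearGroup.coe_mul, Weil.coe_betaBlock, Weil.coe_sigmaBlock, beta,
    mul_fin_two, smul_of, smul_cons, smul_empty, smul_eq_mul, EmbeddingLike.apply_eq_iff_eq,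
    vecCons_inj, and_true]
  grind [zeta5_pow_five, zeta5_sum]

lemma coe_blockData_h_unitTwo_sq_mul_u_one :
    (blockData.h Weil.unitTwo ^ 2 * blockData.u 1 : GL (Fin 3) ℂ) = alpha' := by
  rw [← blockHom_betaBlock_sq_mul_unipotent_one, blockData_h_unitTwo, map_mul, map_pow]
  rfl

lemma coe_blockData_h_unitTwo_mul_w :
    (blockData.h Weil.unitTwo * blockData.w : GL (Fin 3) ℂ) = gamma' := by
  rw [← blockHom_betaBlock_mul_sigmaBlock, blockData_h_unitTwo, map_mul]
  rfl

lemma K_eq : K = blockData.subgroup := by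
  rw [K, ← coe_blockData_w, ← coe_blockData_u_one, gen3_pair,
    BruhatData.subgroup_eq_closure_pair]

lemma S21_eq : S21 = blockData.subgroup := by
  rw [S21, ← coe_blockData_h_unitTwo_sq_mul_u_one, ← coe_blockData_h_unitTwo,
    ← coe_blockData_h_unitTwo_mul_w, gen3_triple]
  apply le_antisymm
  · rw [Subgroup.closure_le, Set.insert_subset_iff, Set.pair_subset_iff]
    have h_mem := blockData.h_mem_subgroup
    exact ⟨mul_mem (pow_mem (h_mem _) 2) (blockData.u_mem_subgroup 1), h_mem _,
      mul_mem (h_mem _) blockData.w_mem_subgroup⟩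
  · rw [BruhatData.subgroup_eq_closure_pair, Subgroup.closure_le, Set.pair_subset_iff]
    set T : Set (GL (Fin 3) ℂ) := {_, _, _}
    have hh : blockData.h Weil.unitTwo ∈ Subgroup.closure T := Subgroup.subset_closure (by simp [T])
    constructor
    · exact (Subgroup.mul_mem_cancel_left _ hh).mp (Subgroup.subset_closure (by simp [T]))
    · exact (Subgroup.mul_mem_cancel_left _ (pow_mem hh 2)).mp
        (Subgroup.subset_closure (by simp [T]))

/-- The isomorphism `S(2,1) ≃* SL(2, 5)`, matching their Bruhat data. -/
def S21Equiv : S21 ≃* SL25 :=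
  (MulEquiv.subgroupCongr S21_eq).trans <|
    (BruhatData.subgroupEquiv blockData_faithful BruhatData.specialLinearGroup_faithful).trans <|
      (MulEquiv.subgroupCongr BruhatData.specialLinearGroup_subgroup).trans Subgroup.topEquiv

lemma S21_le_range_blockHom : S21 ≤ blockHom.range := by
  rw [S21_eq, blockData, BruhatData.subgroup_map]
  exact Subgroup.map_le_range _ _

lemma S21_le_ker_det : S21 ≤ (GeneralLinearGroup.det : GL (Fin 3) ℂ →* ℂˣ).ker := by
  refine S21_le_range_blockHom.trans ?_
  rintro _ ⟨A, rfl⟩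
  exact det_blockHom A

end IcosahedralSubgroup

section CentralGenerator

attribute [local instance] fact_prime_five

/-- The central element `diag(ζ₅³, ζ₅³, ξ) = ρ⁻¹ φ` of `⟨σ, φ⟩`, which generates its cyclic direct
factor of order 60. -/
def centralGen : GL (Fin 3) ℂ :=
  GeneralLinearGroup.mkOfDetNeZero (Matrix.diagonal ![zeta5 ^ 3, zeta5 ^ 3, xi]) <| by
    simp [Matrix.det_diagonal, Fin.prod_univ_succ, zeta5_ne_zero,
      isPrimitiveRoot_xi.ne_zero (by norm_num)]

lemma coe_centralGen : (centralGen : Matrix (Fin 3) (Fin 3) ℂ) =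
    Matrix.diagonal ![zeta5 ^ 3, zeta5 ^ 3, xi] := rfl

lemma coe_centralGen_pow (n : ℕ) : (↑(centralGen ^ n) : Matrix (Fin 3) (Fin 3) ℂ) =
    Matrix.diagonal ![zeta5 ^ (3 * n), zeta5 ^ (3 * n), xi ^ n] := by
  rw [Units.val_pow_eq_pow_val, coe_centralGen, Matrix.diagonal_pow]
  congr 1
  ext i
  fin_cases i <;> simp [pow_mul]

lemma coe_centralGen_pow_five : ↑(centralGen ^ 5) = lambda12 := by
  rw [coe_centralGen_pow, xi_pow_five, pow_mul', zeta5_pow_five, one_pow, lambda12]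

lemma coe_centralGen_pow_twelve : ↑(centralGen ^ 12) = Matrix.diagonal ![zeta5, zeta5, zeta5] := by
  have h_zeta : zeta5 ^ (3 * 12) = zeta5 := by
    rw [show 3 * 12 = 5 * 7 + 1 by norm_num, pow_succ, pow_mul, zeta5_pow_five, one_pow, one_mul]
  rw [coe_centralGen_pow, xi_pow_twelve, h_zeta]

lemma coe_centralGen_pow_fifteen : ↑(centralGen ^ 15) = Matrix.diagonal ![1, 1, Complex.I] := by
  have h_zeta : zeta5 ^ (3 * 15) = 1 :=
    (isPrimitiveRoot_zeta5.pow_eq_one_iff_dvd _).mpr (by decide)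
  rw [coe_centralGen_pow, xi_pow_fifteen, h_zeta]

lemma coe_centralGen_pow_twenty : ↑(centralGen ^ 20) = Matrix.diagonal ![1, 1, omega] := by
  have h_zeta : zeta5 ^ (3 * 20) = 1 :=
    (isPrimitiveRoot_zeta5.pow_eq_one_iff_dvd _).mpr (by decide)
  rw [coe_centralGen_pow, xi_pow_twenty, h_zeta]

lemma coe_u_one_mul_centralGen : (blockData.u 1 * centralGen : GL (Fin 3) ℂ) = phi := by
  have h_zeta : zeta5 ^ 3 * zeta5 ^ 3 = zeta5 := by
    rw [← pow_add, pow_succ, zeta5_pow_five, one_mul]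
  rw [Units.val_mul, coe_blockData_u_one, coe_centralGen, rho, Matrix.diagonal_mul_diagonal, phi]
  congr 1
  ext i
  fin_cases i <;> simp [h_zeta, ← pow_add, zeta5_pow_five]

lemma commute_blockHom_centralGen (A : SpecialLinearGroup (Fin 2) ℂ) :
    Commute (blockHom A) centralGen := by
  apply Units.ext
  rw [Units.val_mul, Units.val_mul, coe_centralGen, coe_blockHom]
  ext i j
  rw [Matrix.mul_diagonal, Matrix.diagonal_mul]
  fin_cases i <;> fin_cases j <;> simp [emb, mul_comm]

lemma orderOf_det_centralGen : orderOf (GeneralLinearGroup.det centralGen) = 60 := by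
  have h_det : (GeneralLinearGroup.det centralGen : ℂ) = xi ^ 73 := by
    rw [GeneralLinearGroup.val_det_apply, coe_centralGen, Matrix.det_diagonal]
    simp only [Fin.prod_univ_three, ← xi_pow_twelve, cons_val_zero, cons_val_one, cons_val]
    ring
  rw [← orderOf_units, h_det]
  exact (isPrimitiveRoot_xi.pow_of_coprime 73 (by norm_num)).eq_orderOf.symm

lemma centralGen_pow_sixty : centralGen ^ 60 = 1 := by
  apply Units.ext
  have h_zeta : zeta5 ^ (3 * 60) = 1 :=
    (isPrimitiveRoot_zeta5.pow_eq_one_iff_dvd _).mpr (by decide)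
  rw [coe_centralGen_pow, h_zeta, isPrimitiveRoot_xi.pow_eq_one, Units.val_one]
  ext i j
  fin_cases i <;> fin_cases j <;> simp

lemma orderOf_centralGen : orderOf centralGen = 60 :=
  Nat.dvd_antisymm (orderOf_dvd_of_pow_eq_one centralGen_pow_sixty)
    (orderOf_det_centralGen ▸ orderOf_map_dvd GeneralLinearGroup.det centralGen)

end CentralGenerator

section Decomposition

attribute [local instance] fact_prime_five

lemma Ci_eq : Ci = Subgroup.zpowers (centralGen ^ 15) := by
  rw [Ci, ← coe_centralGen_pow_fifteen, gen3_singleton]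

lemma Cw_eq : Cw = Subgroup.zpowers (centralGen ^ 20) := by
  rw [Cw, ← coe_centralGen_pow_twenty, gen3_singleton]

lemma E_eq : E = Subgroup.zpowers (centralGen ^ 12) := by
  rw [E, ← coe_centralGen_pow_twelve, gen3_singleton]

lemma Ci_sup_Cw : Ci ⊔ Cw = Subgroup.zpowers (centralGen ^ 5) := by
  rw [Ci_eq, Cw_eq, zpowers_pow_sup_zpowers_pow]
  norm_num

lemma zpowers_centralGen :
    Subgroup.zpowers (centralGen ^ 5) ⊔ Subgroup.zpowers (centralGen ^ 12) =
      Subgroup.zpowers centralGen := by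
  rw [zpowers_pow_sup_zpowers_pow]
  norm_num

lemma gen3_lambda12_epsilon :
    gen3 {lambda12, Matrix.diagonal ![zeta5, zeta5, zeta5]} = Subgroup.zpowers centralGen := by
  rw [← coe_centralGen_pow_five, ← coe_centralGen_pow_twelve, gen3_pair, Set.insert_eq,
    Subgroup.closure_union, ← Subgroup.zpowers_eq_closure, ← Subgroup.zpowers_eq_closure,
    zpowers_centralGen]

lemma commute_of_mem_S21_of_mem_zpowers {a b : GL (Fin 3) ℂ} (ha : a ∈ S21)
    (hb : b ∈ Subgroup.zpowers centralGen) : Commute a b := by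
  obtain ⟨A, rfl⟩ := S21_le_range_blockHom ha
  obtain ⟨n, rfl⟩ := hb
  exact (commute_blockHom_centralGen A).zpow_right n

lemma commute_u_one_centralGen : Commute (blockData.u 1) centralGen :=
  commute_blockHom_centralGen _

lemma u_one_mul_centralGen_pow_five : (blockData.u 1 * centralGen) ^ 5 = centralGen ^ 5 := by
  have hu : blockData.u 1 ^ 5 = 1 := by
    rw [← AddChar.map_nsmul_eq_pow, nsmul_one, CharP.cast_eq_zero, AddChar.map_zero_eq_one]
  rw [commute_u_one_centralGen.mul_pow, hu, one_mul]

lemma w_mul_u_one_mul_centralGen_pow_four_pow_three :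
    (blockData.w * (blockData.u 1 * centralGen) ^ 4) ^ 3 = centralGen ^ 12 := by
  have hu : blockData.u 1 ^ 4 = blockData.u (-1) := by
    rw [← AddChar.map_nsmul_eq_pow]
    rfl
  have h_comm : Commute (blockData.w * blockData.u (-1)) (centralGen ^ 4) :=
    commute_of_mem_S21_of_mem_zpowers
      (S21_eq ▸ mul_mem blockData.w_mem_subgroup (blockData.u_mem_subgroup _))
      (pow_mem (Subgroup.mem_zpowers _) 4)
  rw [commute_u_one_centralGen.mul_pow, hu, ← mul_assoc, h_comm.mul_pow,
    blockData.w_mul_u_neg_one_pow_three, one_mul, ← pow_mul]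

lemma gen3_sigma_phi : gen3 {sigma, phi} = S21 ⊔ Subgroup.zpowers centralGen := by
  rw [← coe_blockData_w, ← coe_u_one_mul_centralGen, gen3_pair, S21_eq]
  set P := Subgroup.closure {blockData.w, blockData.u 1 * centralGen}
  have hw : blockData.w ∈ P := Subgroup.subset_closure (by simp)
  have hf : blockData.u 1 * centralGen ∈ P := Subgroup.subset_closure (by simp)
  have hc : Subgroup.zpowers centralGen ≤ P := by
    rw [← zpowers_centralGen, sup_le_iff, Subgroup.zpowers_le, Subgroup.zpowers_le,
      ← u_one_mul_centralGen_pow_five, ← w_mul_u_one_mul_centralGen_pow_four_pow_three]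
    exact ⟨pow_mem hf 5, pow_mem (mul_mem hw (pow_mem hf 4)) 3⟩
  apply le_antisymm
  · rw [Subgroup.closure_le, Set.pair_subset_iff]
    exact ⟨Subgroup.mem_sup_left blockData.w_mem_subgroup,
      Subgroup.mul_mem_sup (blockData.u_mem_subgroup 1) (Subgroup.mem_zpowers _)⟩
  · refine sup_le ?_ hc
    rw [BruhatData.subgroup_eq_closure_pair, Subgroup.closure_le, Set.pair_subset_iff]
    exact ⟨hw, (Subgroup.mul_mem_cancel_right P (hc (Subgroup.mem_zpowers _))).mp hf⟩

lemma S21_le_ker_det_pow (m : ℕ) : S21 ≤ (GeneralLinearGroup.det ^ m).ker := fun g hg ↦ by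
  rw [MonoidHom.mem_ker, MonoidHom.pow_apply, MonoidHom.mem_ker.mp (S21_le_ker_det hg), one_pow]

lemma zpowers_centralGen_pow_le_ker_det_pow {m n : ℕ} (h : 60 ∣ n * m) :
    Subgroup.zpowers (centralGen ^ n) ≤ (GeneralLinearGroup.det ^ m).ker := by
  rw [Subgroup.zpowers_le, MonoidHom.mem_ker, MonoidHom.pow_apply, ← map_pow, ← pow_mul,
    orderOf_dvd_iff_pow_eq_one.mp (orderOf_centralGen ▸ h), map_one]

lemma inf_zpowers_centralGen_pow_eq_bot {T : Subgroup (GL (Fin 3) ℂ)} {m n : ℕ}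
    (hT : T ≤ (GeneralLinearGroup.det ^ m).ker) (hn : n ≠ 0) (hn60 : n ∣ 60)
    (h_coprime : (60 / n).Coprime m) : T ⊓ Subgroup.zpowers (centralGen ^ n) = ⊥ := by
  have h_order : orderOf (centralGen ^ n) = 60 / n := by
    rw [orderOf_pow_of_dvd hn (orderOf_centralGen ▸ hn60), orderOf_centralGen]
  have h_order_det : orderOf (GeneralLinearGroup.det (centralGen ^ n)) = 60 / n := by
    rw [map_pow, orderOf_pow_of_dvd hn (orderOf_det_centralGen ▸ hn60), orderOf_det_centralGen]
  exact inf_zpowers_eq_bot hT (h_order_det.trans h_order.symm) (h_order ▸ h_coprime)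

lemma S21_inf_Ci : S21 ⊓ Ci = ⊥ := by
  rw [Ci_eq]
  exact inf_zpowers_centralGen_pow_eq_bot (S21_le_ker_det_pow 1) (by decide) (by decide)
    (by decide)

lemma S21_sup_Ci_inf_Cw : (S21 ⊔ Ci) ⊓ Cw = ⊥ := by
  have h_ker : S21 ⊔ Ci ≤ (GeneralLinearGroup.det ^ 4).ker :=
    sup_le (S21_le_ker_det_pow 4) (Ci_eq ▸ zpowers_centralGen_pow_le_ker_det_pow (by decide))
  rw [Cw_eq]
  exact inf_zpowers_centralGen_pow_eq_bot h_ker (by decide) (by decide) (by decide)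

lemma S21_sup_Ci_sup_Cw_inf_E : (S21 ⊔ Ci ⊔ Cw) ⊓ E = ⊥ := by
  have h_ker : S21 ⊔ (Ci ⊔ Cw) ≤ (GeneralLinearGroup.det ^ 12).ker :=
    sup_le (S21_le_ker_det_pow 12)
      (Ci_sup_Cw ▸ zpowers_centralGen_pow_le_ker_det_pow (by decide))
  rw [sup_assoc, E_eq]
  exact inf_zpowers_centralGen_pow_eq_bot h_ker (by decide) (by decide) (by decide)

lemma disjoint_S21_zpowers_centralGen : Disjoint S21 (Subgroup.zpowers centralGen) := by
  rw [disjoint_iff, ← pow_one centralGen]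
  exact inf_zpowers_centralGen_pow_eq_bot (S21_le_ker_det_pow 1) (by decide) (by decide)
    (by decide)

end Decomposition

/-- The isomorphism of `⟨σ, φ⟩` with `SL(2, 5) × ℤ/4 × ℤ/3 × ℤ/5`. -/
def gen3SigmaPhiEquiv : gen3 {sigma, phi} ≃*
    SL25 × Multiplicative (ZMod 4) × Multiplicative (ZMod 3) × Multiplicative (ZMod 5) :=
  have h_zpowers : Subgroup.zpowers centralGen ≃*
      Multiplicative (ZMod 4) × Multiplicative (ZMod 3) × Multiplicative (ZMod 5) :=
    (zpowersEquivZMod (n := 4 * (3 * 5)) orderOf_centralGen).trans <|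
      (zmodMulEquivProd (by decide)).trans <|
        (MulEquiv.refl _).prodCongr (zmodMulEquivProd (by decide))
  (MulEquiv.subgroupCongr gen3_sigma_phi).trans <|
    (supEquivProd (fun _ ha _ hb ↦ commute_of_mem_S21_of_mem_zpowers ha hb)
      disjoint_S21_zpowers_centralGen).trans (S21Equiv.prodCongr h_zpowers)

theorem stmt17 :
    (sigma * phi ^ 4) ^ 3 = Matrix.diagonal ![zeta5, zeta5, zeta5] ∧
    gen3 {sigma, phi} = K ⊔ gen3 {lambda12, Matrix.diagonal ![zeta5, zeta5, zeta5]} ∧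
    (∀ a ∈ S21, ∀ b ∈ Ci, a * b = b * a) ∧
    (∀ a ∈ S21, ∀ b ∈ Cw, a * b = b * a) ∧
    (∀ a ∈ S21, ∀ b ∈ E, a * b = b * a) ∧
    (∀ a ∈ Ci, ∀ b ∈ Cw, a * b = b * a) ∧
    (∀ a ∈ Ci, ∀ b ∈ E, a * b = b * a) ∧
    (∀ a ∈ Cw, ∀ b ∈ E, a * b = b * a) ∧
    S21 ⊓ Ci = ⊥ ∧
    (S21 ⊔ Ci) ⊓ Cw = ⊥ ∧
    (S21 ⊔ Ci ⊔ Cw) ⊓ E = ⊥ ∧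
    S21 ⊔ Ci ⊔ Cw ⊔ E = gen3 {sigma, phi} ∧
    Nonempty (gen3 {sigma, phi} ≃*
      SL25 × Multiplicative (ZMod 4) × Multiplicative (ZMod 3) × Multiplicative (ZMod 5)) := by
  have hCi : Ci ≤ Subgroup.zpowers centralGen := Ci_eq ▸ zpowers_pow_le_zpowers _ 15
  have hCw : Cw ≤ Subgroup.zpowers centralGen := Cw_eq ▸ zpowers_pow_le_zpowers _ 20
  have hE : E ≤ Subgroup.zpowers centralGen := E_eq ▸ zpowers_pow_le_zpowers _ 12
  refine ⟨?_, ?_,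
    fun a ha b hb ↦ commute_of_mem_S21_of_mem_zpowers ha (hCi hb),
    fun a ha b hb ↦ commute_of_mem_S21_of_mem_zpowers ha (hCw hb),
    fun a ha b hb ↦ commute_of_mem_S21_of_mem_zpowers ha (hE hb),
    fun a ha b hb ↦ commute_of_mem_zpowers (hCi ha) (hCw hb),
    fun a ha b hb ↦ commute_of_mem_zpowers (hCi ha) (hE hb),
    fun a ha b hb ↦ commute_of_mem_zpowers (hCw ha) (hE hb),
    S21_inf_Ci, S21_sup_Ci_inf_Cw, S21_sup_Ci_sup_Cw_inf_E, ?_, ⟨gen3SigmaPhiEquiv⟩⟩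
  · rw [← coe_blockData_w, ← coe_u_one_mul_centralGen, ← coe_centralGen_pow_twelve]
    exact congr_arg Units.val w_mul_u_one_mul_centralGen_pow_four_pow_three
  · rw [gen3_sigma_phi, S21_eq, K_eq, gen3_lambda12_epsilon]
  · rw [gen3_sigma_phi, sup_assoc, sup_assoc, ← sup_assoc Ci, Ci_sup_Cw, E_eq, zpowers_centralGen]
end
end

section
/- For every integer d ≥ 5, the linear automorphism group Lin(YZ^{d−1} + X^d + Y^d) ⊆ PGL(3,ℂ) of the smooth plane curve C(d) : YZ^{d−1} + X^d + Y^d = 0 is a cyclic group of order d(d−1). -/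
noncomputable section
open Matrix MvPolynomial

/-- The subgroup of nonzero scalar matrices in `GL(3, ℂ)`. -/
def scalarSub : Subgroup (GL (Fin 3) ℂ) :=
  (Units.map (algebraMap ℂ (Matrix (Fin 3) (Fin 3) ℂ)).toMonoidHom).range

instance : scalarSub.Normal := by
  constructor
  rintro n ⟨c, rfl⟩ g
  refine ⟨c, ?_⟩
  ext
  simp only [Units.coe_map, RingHom.toMonoidHom_eq_coe, MonoidHom.coe_coe, Units.val_mul]
  rw [← Algebra.commutes (↑c : ℂ) (↑g : Matrix (Fin 3) (Fin 3) ℂ), mul_assoc,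
    ← Units.val_mul, mul_inv_cancel, Units.val_one, mul_one]

/-- `PGL(3, ℂ)`: the quotient of `GL(3, ℂ)` by the nonzero scalar matrices. -/
abbrev PGL3 := GL (Fin 3) ℂ ⧸ scalarSub

/-- `g` maps the zero set of `F` in `ℂ³` onto itself. -/
def Preserves (F : MvPolynomial (Fin 3) ℂ) (g : GL (Fin 3) ℂ) : Prop :=
  (fun v => (g : Matrix (Fin 3) (Fin 3) ℂ).mulVec v) '' {v : Fin 3 → ℂ | eval v F = 0}
    = {v : Fin 3 → ℂ | eval v F = 0}

/-- The subgroup of `GL(3, ℂ)` of matrices mapping the zero set of `F` onto itself. -/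
def LinGL (F : MvPolynomial (Fin 3) ℂ) : Subgroup (GL (Fin 3) ℂ) where
  carrier := {g | Preserves F g}
  one_mem' := by
    show Preserves F 1
    unfold Preserves
    simp [Matrix.one_mulVec]
  mul_mem' := by
    intro a b ha hb
    show Preserves F (a * b)
    unfold Preserves at *
    have h : (fun v => ((a * b : GL (Fin 3) ℂ) : Matrix (Fin 3) (Fin 3) ℂ).mulVec v)
        = (fun v => (a : Matrix (Fin 3) (Fin 3) ℂ).mulVec v) ∘
          (fun v => (b : Matrix (Fin 3) (Fin 3) ℂ).mulVec v) := by
      funext v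
      simp [Matrix.mulVec_mulVec]
    rw [h, Set.image_comp, hb, ha]
  inv_mem' := by
    intro a ha
    show Preserves F a⁻¹
    unfold Preserves at *
    conv_lhs => rw [← ha, ← Set.image_comp]
    have h : ((fun v => ((a⁻¹ : GL (Fin 3) ℂ) : Matrix (Fin 3) (Fin 3) ℂ).mulVec v) ∘
        (fun v => (a : Matrix (Fin 3) (Fin 3) ℂ).mulVec v)) = id := by
      funext v
      rw [Function.comp_apply, Matrix.mulVec_mulVec, ← Units.val_mul, inv_mul_cancel,
        Units.val_one, Matrix.one_mulVec, id_eq]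
    rw [h, Set.image_id]

/-- The linear automorphism group `Lin(F) ⊆ PGL(3, ℂ)`:
classes of matrices mapping the zero set of `F` onto itself. -/
def Lin (F : MvPolynomial (Fin 3) ℂ) : Subgroup PGL3 :=
  (LinGL F).map (QuotientGroup.mk' scalarSub)

/-!
Write `F = Y Zⁿ + Xⁿ⁺¹ + Yⁿ⁺¹` with `n = d - 1`. As `F` is prime (Eisenstein at `Y`), the
Nullstellensatz shows that a matrix `g` preserving the zero set of `F` satisfies `F ∘ g = c F`.
Hence `g` preserves the relation `D³F(v)(w, ·, ·) = 0` between vectors `v` and `w`. For `n ≥ 4` this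
relation reads `v₀w₀ = v₁w₁ = v₂w₂ = 0` and `v₂w₁ = 0`, so it holds for two basis vectors
`(eᵢ, eⱼ)` exactly when `i ≠ j` and `(i, j) ≠ (2, 1)`. Applied to the columns of `g`, the first
three equations force `g` to be monomial and the last, asymmetric one forces it to be diagonal.
Comparing coefficients, `g` is a scalar multiple of `diag(ζ, 1, ξ)` with `ζⁿ⁺¹ = ξⁿ = 1`, and the
product of the groups of `(n + 1)`-st and `n`-th roots of unity is cyclic of order `(n + 1) n`.
-/

section LinearSubstitution

variable {m n R : Type*} [CommSemiring R]

/-- The derivative of a polynomial in the direction of a constant vector `w`, i.e. `∑ wᵢ ∂/∂Xᵢ`. -/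
def dirDeriv (w : n → R) : Derivation R (MvPolynomial n R) (MvPolynomial n R) :=
  mkDerivation R fun i => C (w i)

@[simp]
lemma dirDeriv_X (w : n → R) (i : n) : dirDeriv w (X i) = C (w i) :=
  mkDerivation_X R _ i

/-- The relation "`w` lies in the kernel of the third polar of `F` at `v`": the symmetric trilinear
form `D³F(v)` vanishes as soon as one of its arguments is `w`. -/
def ThirdPolarVanishes (F : MvPolynomial n R) (v w : n → R) : Prop :=
  ∀ a b, eval v (dirDeriv a (dirDeriv b (dirDeriv w F))) = 0

variable [Fintype n]

lemma eval_bind₁_toMvPolynomial (A : Matrix m n R) (p : MvPolynomial m R) (v : n → R) :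
    eval v (bind₁ A.toMvPolynomial p) = eval (A *ᵥ v) p := by
  rw [eval, eval₂Hom_bind₁]
  exact congrArg (fun x => eval x p) (funext fun i => toMvPolynomial_eval_eq_apply A i v)

lemma dirDeriv_toMvPolynomial (A : Matrix m n R) (w : n → R) (i : m) :
    dirDeriv w (A.toMvPolynomial i) = C ((A *ᵥ w) i) := by
  simp [toMvPolynomial, ← C_mul_X_eq_monomial, mulVec, dotProduct, ← smul_eq_C_mul]

lemma dirDeriv_bind₁_toMvPolynomial (A : Matrix m n R) (w : n → R) (p : MvPolynomial m R) :
    dirDeriv w (bind₁ A.toMvPolynomial p) = bind₁ A.toMvPolynomial (dirDeriv (A *ᵥ w) p) := by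
  induction p using MvPolynomial.induction_on with
  | C a => simp
  | add p q hp hq => simp [hp, hq]
  | mul_X p i hp => simp [hp, dirDeriv_toMvPolynomial]

lemma ThirdPolarVanishes.mulVec {F : MvPolynomial n R} {A : Matrix n n R} {c : R}
    (hF : bind₁ A.toMvPolynomial F = C c * F) (hA : Function.Surjective A.mulVec) {v w : n → R}
    (h : ThirdPolarVanishes F v w) : ThirdPolarVanishes F (A *ᵥ v) (A *ᵥ w) := by
  intro a b
  obtain ⟨a, rfl⟩ := hA a
  obtain ⟨b, rfl⟩ := hA b
  rw [← eval_bind₁_toMvPolynomial, ← dirDeriv_bind₁_toMvPolynomial,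
    ← dirDeriv_bind₁_toMvPolynomial, ← dirDeriv_bind₁_toMvPolynomial, hF, ← smul_eq_C_mul]
  simp only [Derivation.map_smul, smul_eval, h a b, mul_zero]

end LinearSubstitution

section Semiinvariance

variable {σ K R : Type*} [Field K] [CommRing R]

lemma dvd_of_forall_eval_eq_zero [Finite σ] [IsAlgClosed K] {p q : MvPolynomial σ K} (hp : Prime p)
    (h : ∀ v, eval v p = 0 → eval v q = 0) : p ∣ q := by
  have : (Ideal.span {p}).IsPrime := (Ideal.span_singleton_prime hp.ne_zero).2 hp
  rw [← Ideal.mem_span_singleton, ← IsPrime.vanishingIdeal_zeroLocus (K := K) (Ideal.span {p})]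
  intro v hv
  exact h v (hv p (Ideal.mem_span_singleton_self p))

lemma exists_eq_C_mul_of_dvd_of_isHomogeneous [IsDomain R] {d : ℕ} {p q : MvPolynomial σ R}
    (hp : p.IsHomogeneous d) (hq : q.IsHomogeneous d) (h : p ∣ q) : ∃ c, q = C c * p := by
  obtain ⟨r, rfl⟩ := h
  by_cases h0 : p * r = 0
  · exact ⟨0, by simp [h0]⟩
  have hdeg : d = d + r.totalDegree := by
    conv_lhs => rw [← hq.totalDegree h0, totalDegree_mul_of_isDomain (left_ne_zero_of_mul h0)
      (right_ne_zero_of_mul h0), hp.totalDegree (left_ne_zero_of_mul h0)]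
  exact ⟨r.coeff 0, by rw [mul_comm p, ← totalDegree_eq_zero_iff_eq_C.1 (by lia)]⟩

lemma exists_bind₁_toMvPolynomial_eq_C_mul [Fintype σ] [IsAlgClosed K] {d : ℕ}
    {F : MvPolynomial σ K} (hF : Prime F) (hd : F.IsHomogeneous d) {A : Matrix σ σ K}
    (hA : ∀ v, eval v F = 0 → eval (A *ᵥ v) F = 0) :
    ∃ c, bind₁ A.toMvPolynomial F = C c * F := by
  have hdeg : (bind₁ A.toMvPolynomial F).IsHomogeneous d := by
    rw [← aeval_eq_bind₁]
    simpa only [one_mul] using hd.aeval _ A.toMvPolynomial_isHomogeneous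
  refine exists_eq_C_mul_of_dvd_of_isHomogeneous hd hdeg ?_
  refine dvd_of_forall_eval_eq_zero hF fun v hv => ?_
  rw [eval_bind₁_toMvPolynomial]
  exact hA v hv

end Semiinvariance

lemma irreducible_X_pow_add_C_mul {R : Type*} [CommRing R] [IsDomain R] {p q : R} (hp : Prime p)
    (hq : ¬ p ∣ q) {k : ℕ} (hk : k ≠ 0) :
    Irreducible (Polynomial.X ^ k + Polynomial.C (p * q)) := by
  have hk_pos := Nat.pos_of_ne_zero hk
  refine Polynomial.irreducible_of_eisenstein_criterion (P := Ideal.span {p})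
    ((Ideal.span_singleton_prime hp.ne_zero).2 hp) ?_ (fun i hi => ?_) ?_ ?_
    (Polynomial.monic_X_pow_add_C _ hk).isPrimitive
  · rw [Polynomial.leadingCoeff_X_pow_add_C hk_pos, Ideal.mem_span_singleton]
    exact hp.not_dvd_one
  · rw [Polynomial.degree_X_pow_add_C hk_pos, Nat.cast_lt] at hi
    rw [Ideal.mem_span_singleton, Polynomial.coeff_add, Polynomial.coeff_X_pow, if_neg hi.ne,
      zero_add, Polynomial.coeff_C]
    split_ifs
    exacts [dvd_mul_right p q, dvd_zero p]
  · rwa [Polynomial.degree_X_pow_add_C hk_pos, Nat.cast_pos]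
  · rw [Ideal.span_singleton_pow, Ideal.mem_span_singleton, Polynomial.coeff_add,
      Polynomial.coeff_X_pow, if_neg hk.symm, zero_add, Polynomial.coeff_C_zero, sq,
      mul_dvd_mul_iff_left hp.ne_zero]
    exact hq

section Matrix

variable {n R : Type*} [Fintype n] [DecidableEq n] [CommRing R]

lemma exists_perm_forall_apply_ne_zero_of_det_ne_zero {A : Matrix n n R} (hA : A.det ≠ 0) :
    ∃ σ : Equiv.Perm n, ∀ i, A (σ i) i ≠ 0 := by
  contrapose! hA
  rw [det_apply]
  refine Finset.sum_eq_zero fun σ _ => ?_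
  obtain ⟨i, hi⟩ := hA σ
  exact smul_eq_zero_of_right _ (Finset.prod_eq_zero (Finset.mem_univ i) hi)

/-- The embedding of the diagonal torus into the general linear group. -/
def diagonalUnits : (n → Rˣ) →* GL n R :=
  (Units.map (diagonalRingHom n R).toMonoidHom).comp MulEquiv.piUnits.symm.toMonoidHom

@[simp]
lemma coe_diagonalUnits (u : n → Rˣ) :
    (diagonalUnits u : Matrix n n R) = diagonal fun i => (u i : R) :=
  rfl

lemma exists_diagonalUnits_eq_of_isDiag {g : GL n R} (hg : (g : Matrix n n R).IsDiag) :
    ∃ u, diagonalUnits u = g := by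
  have hdet : IsUnit (∏ i, diag (g : Matrix n n R) i) := by
    rw [← det_diagonal, hg.diagonal_diag]
    exact g.isUnit.map detMonoidHom
  choose u hu using fun i => IsUnit.prod_univ_iff.1 hdet i
  exact ⟨u, Units.ext <| by rw [coe_diagonalUnits, funext hu, hg.diagonal_diag]⟩

end Matrix

section Curve

variable (R : Type*) [CommRing R]

/-- The form `Y Zⁿ + Xⁿ⁺¹ + Yⁿ⁺¹` defining the curve `C(n + 1)`; the coordinates `X`, `Y`, `Z` have
index `0`, `1`, `2`. -/
def curveForm (n : ℕ) : MvPolynomial (Fin 3) R :=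
  X 1 * X 2 ^ n + X 0 ^ (n + 1) + X 1 ^ (n + 1)

variable {R}

@[simp]
lemma eval_curveForm (n : ℕ) (v : Fin 3 → R) :
    eval v (curveForm R n) = v 1 * v 2 ^ n + v 0 ^ (n + 1) + v 1 ^ (n + 1) := by
  simp [curveForm]

lemma isHomogeneous_curveForm (n : ℕ) : (curveForm R n).IsHomogeneous (n + 1) := by
  have h := (isHomogeneous_X R (1 : Fin 3)).mul (isHomogeneous_X_pow (R := R) (2 : Fin 3) n)
  rw [add_comm] at h
  exact (h.add (isHomogeneous_X_pow _ _)).add (isHomogeneous_X_pow _ _)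

lemma prime_curveForm [IsDomain R] [UniqueFactorizationMonoid R] {n : ℕ} (hn : n ≠ 0) :
    Prime (curveForm R n) := by
  have hndvd : ¬ (X 0 : MvPolynomial (Fin 2) R) ∣ X 1 ^ n + X 0 ^ n := by
    rintro ⟨r, hr⟩
    simpa [hn] using congrArg (eval ![0, 1]) hr
  have heq : finSuccEquiv R 2 (curveForm R n)
      = Polynomial.X ^ (n + 1) + Polynomial.C (X 0 * (X 1 ^ n + X 0 ^ n)) := by
    rw [curveForm, show (1 : Fin 3) = Fin.succ 0 from rfl, show (2 : Fin 3) = Fin.succ 1 from rfl]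
    simp only [map_add, map_mul, map_pow, finSuccEquiv_X_zero, finSuccEquiv_X_succ]
    ring
  rw [← irreducible_iff_prime, ← MulEquiv.irreducible_iff (finSuccEquiv R 2), heq]
  exact irreducible_X_pow_add_C_mul X_prime hndvd n.succ_ne_zero

lemma eval_dirDeriv_curveForm (n : ℕ) (v a b w : Fin 3 → R) :
    eval v (dirDeriv a (dirDeriv b (dirDeriv w (curveForm R (n + 3))))) =
      (n + 4) * (n + 3) * (n + 2) * (w 0 * a 0 * b 0 * v 0 ^ (n + 1)
          + w 1 * a 1 * b 1 * v 1 ^ (n + 1))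
        + (n + 3) * (n + 2) * v 2 ^ (n + 1) * (w 1 * a 2 * b 2 + w 2 * (a 1 * b 2 + a 2 * b 1))
        + (n + 3) * (n + 2) * (n + 1) * (w 2 * a 2 * b 2 * v 1 * v 2 ^ n) := by
  simp only [curveForm, map_add, Derivation.leibniz, Derivation.leibniz_pow, dirDeriv_X,
    map_nsmul, derivation_C, smul_eq_mul]
  simp only [Nat.add_one_sub_one, map_zero, mul_zero, nsmul_eq_mul, Nat.cast_add, Nat.cast_ofNat,
    zero_mul, add_zero, add_tsub_cancel_right, Nat.cast_one, zero_add, map_mul, eval_X, map_add,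
    map_natCast, eval_ofNat, eval_C, map_one, map_pow]
  ring

lemma thirdPolarVanishes_curveForm_iff [IsDomain R] [CharZero R] {n : ℕ} (hn : 4 ≤ n)
    {v w : Fin 3 → R} :
    ThirdPolarVanishes (curveForm R n) v w ↔
      (∀ i, v i = 0 ∨ w i = 0) ∧ (v 2 = 0 ∨ w 1 = 0) := by
  obtain ⟨k, rfl⟩ : ∃ k, n = k + 1 + 3 := ⟨n - 4, by lia⟩
  simp only [ThirdPolarVanishes, eval_dirDeriv_curveForm]
  constructor
  · intro h
    have hcast (m : ℕ) : (k + 1 + (m + 1) : R) ≠ 0 := by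
      exact_mod_cast Nat.succ_ne_zero (k + 1 + m)
    have h2 : (k + 1 + 2 : R) ≠ 0 := by simpa [one_add_one_eq_two] using hcast 1
    have h3 : (k + 1 + 3 : R) ≠ 0 := by exact_mod_cast hcast 2
    have h4 : (k + 1 + 4 : R) ≠ 0 := by exact_mod_cast hcast 3
    have h00 : v 0 = 0 ∨ w 0 = 0 := by
      simpa [h2, h3, h4, or_comm] using h ![1, 0, 0] ![1, 0, 0]
    have h11 : v 1 = 0 ∨ w 1 = 0 := by
      simpa [h2, h3, h4, or_comm] using h ![0, 1, 0] ![0, 1, 0]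
    have h22 : v 2 = 0 ∨ w 2 = 0 := by
      simpa [h2, h3, or_comm] using h ![0, 1, 0] ![0, 0, 1]
    have h21 : v 2 = 0 ∨ w 1 = 0 := by
      rcases h22 with hv | hw
      · exact Or.inl hv
      · simpa [h2, h3, hw] using h ![0, 0, 1] ![0, 0, 1]
    exact ⟨by simp [Fin.forall_fin_succ, *], h21⟩
  · rintro ⟨h, h21⟩ a b
    rcases h 0 with h0 | h0 <;> rcases h 1 with h1 | h1 <;> rcases h 2 with h2 | h2 <;>
      rcases h21 with h21 | h21 <;> simp [h0, h1, h2, h21]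

lemma isDiag_of_bind₁_curveForm [IsDomain R] [CharZero R] {n : ℕ} (hn : 4 ≤ n)
    {A : Matrix (Fin 3) (Fin 3) R} {c : R} (hunit : IsUnit A)
    (hA : bind₁ A.toMvPolynomial (curveForm R n) = C c * curveForm R n) : A.IsDiag := by
  have hsurj : Function.Surjective A.mulVec :=
    mulVec_surjective_iff_isUnit.2 hunit
  have hcol {i j : Fin 3} (hij : i ≠ j) (h21 : ¬ (i = 2 ∧ j = 1)) :
      (∀ r, A r i = 0 ∨ A r j = 0) ∧ (A 2 i = 0 ∨ A 1 j = 0) := by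
    have hbasis : ThirdPolarVanishes (curveForm R n) (Pi.single i 1) (Pi.single j 1) := by
      rw [thirdPolarVanishes_curveForm_iff hn]
      simp only [Pi.single_apply]
      grind
    simpa [thirdPolarVanishes_curveForm_iff hn] using hbasis.mulVec hA hsurj
  have hrow {i j : Fin 3} (hij : i ≠ j) (r : Fin 3) : A r i = 0 ∨ A r j = 0 := by
    by_cases h21 : i = 2 ∧ j = 1
    · exact ((hcol hij.symm (by grind)).1 r).symm
    · exact (hcol hij h21).1 r
  obtain ⟨σ, hσ⟩ := exists_perm_forall_apply_ne_zero_of_det_ne_zero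
    ((isUnit_iff_isUnit_det A).1 hunit).ne_zero
  have h21 : σ.symm 2 = 2 ∧ σ.symm 1 = 1 := by
    by_contra h21
    have h2 := hσ (σ.symm 2)
    have h1 := hσ (σ.symm 1)
    rw [σ.apply_symm_apply] at h1 h2
    exact (hcol (σ.symm.injective.ne (by decide)) h21).2.elim h2 h1
  obtain rfl : σ = 1 := by
    clear hσ
    decide +revert
  exact fun r j hrj => (hrow hrj r).resolve_left (hσ r)

lemma pow_eq_pow_of_bind₁_diagonalUnits_curveForm {n : ℕ} (hn : n ≠ 0) {u : Fin 3 → Rˣ} {c : R}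
    (h : bind₁ (diagonalUnits u : Matrix (Fin 3) (Fin 3) R).toMvPolynomial (curveForm R n)
      = C c * curveForm R n) :
    u 0 ^ (n + 1) = u 1 ^ (n + 1) ∧ u 2 ^ n = u 1 ^ n := by
  have heval (v : Fin 3 → R) :
      eval (diagonal (fun i => (u i : R)) *ᵥ v) (curveForm R n) = c * eval v (curveForm R n) := by
    simpa only [eval_bind₁_toMvPolynomial, coe_diagonalUnits, eval_mul, eval_C]
      using congrArg (eval v) h
  have h0 : (u 0 : R) ^ (n + 1) = c := by
    simpa [hn, mulVec_diagonal] using heval ![1, 0, 0]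
  have h1 : (u 1 : R) ^ (n + 1) = c := by
    simpa [hn, mulVec_diagonal] using heval ![0, 1, 0]
  have h2 : (u 1 * u 2 ^ n + u 1 ^ (n + 1) : R) = c * (1 + 1) := by
    simpa [hn, mulVec_diagonal] using heval ![0, 1, 1]
  constructor
  · exact_mod_cast h0.trans h1.symm
  · have h3 : (u 2 : R) ^ n = u 1 ^ n := by
      refine (u 1).isUnit.mul_left_cancel ?_
      linear_combination h2 - 2 * h1
    exact_mod_cast h3

/-- The symmetries `(X : Y : Z) ↦ (ζ X : Y : ξ Z)` of the curve `Y Zⁿ + Xⁿ⁺¹ + Yⁿ⁺¹ = 0`, where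
`ζⁿ⁺¹ = 1` and `ξⁿ = 1`, lifted to the general linear group. -/
def curveSymmetry (n : ℕ) : rootsOfUnity (n + 1) R × rootsOfUnity n R →* GL (Fin 3) R where
  toFun p := diagonalUnits ![p.1, 1, p.2]
  map_one' := by
    rw [← map_one diagonalUnits]
    congr 1
    ext i
    fin_cases i <;> rfl
  map_mul' p q := by
    rw [← map_mul]
    congr 1
    ext i
    fin_cases i <;> simp

lemma eval_curveSymmetry_mulVec {n : ℕ} (p : rootsOfUnity (n + 1) R × rootsOfUnity n R)
    (v : Fin 3 → R) :
    eval ((curveSymmetry n p : Matrix (Fin 3) (Fin 3) R) *ᵥ v) (curveForm R n)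
      = eval v (curveForm R n) := by
  have h1 := (mem_rootsOfUnity' _ _).1 p.1.2
  have h2 := (mem_rootsOfUnity' _ _).1 p.2.2
  simp [curveSymmetry, mulVec_diagonal, mul_pow, h1, h2]

end Curve

lemma preserves_iff {F : MvPolynomial (Fin 3) ℂ} {g : GL (Fin 3) ℂ} :
    Preserves F g ↔
      ∀ v, eval ((g : Matrix (Fin 3) (Fin 3) ℂ) *ᵥ v) F = 0 ↔ eval v F = 0 := by
  have hbij : Function.Bijective (g : Matrix (Fin 3) (Fin 3) ℂ).mulVec :=
    ⟨mulVec_injective_of_isUnit g.isUnit, mulVec_surjective_iff_isUnit.2 g.isUnit⟩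
  refine ((Equiv.ofBijective _ hbij).eq_preimage_iff_image_eq _ _).symm.trans ?_
  rw [eq_comm, Set.ext_iff]
  rfl

lemma diagonalUnits_const_mem_scalarSub (c : ℂˣ) : diagonalUnits (fun _ => c) ∈ scalarSub :=
  ⟨c, Units.ext (by ext; rfl)⟩

lemma apply_self_eq_of_mem_scalarSub {g : GL (Fin 3) ℂ} (hg : g ∈ scalarSub) (i j : Fin 3) :
    g i i = g j j := by
  obtain ⟨c, rfl⟩ := hg
  simp [algebraMap_matrix_apply]

lemma injective_mk_comp_curveSymmetry (n : ℕ) :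
    Function.Injective ((QuotientGroup.mk' scalarSub).comp (curveSymmetry (R := ℂ) n)) := by
  rw [injective_iff_map_eq_one]
  rintro ⟨ζ, ξ⟩ h
  have hmem : curveSymmetry n (ζ, ξ) ∈ scalarSub := (QuotientGroup.eq_one_iff _).1 h
  have hζ := apply_self_eq_of_mem_scalarSub hmem 0 1
  have hξ := apply_self_eq_of_mem_scalarSub hmem 2 1
  simpa [curveSymmetry] using And.intro hζ hξ

lemma exists_diagonalUnits_eq_of_preserves_curveForm {n : ℕ} (hn : 4 ≤ n) {g : GL (Fin 3) ℂ}
    (hg : Preserves (curveForm ℂ n) g) :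
    ∃ u, diagonalUnits u = g ∧ u 0 ^ (n + 1) = u 1 ^ (n + 1) ∧ u 2 ^ n = u 1 ^ n := by
  have hn0 : n ≠ 0 := by lia
  obtain ⟨c, hc⟩ := exists_bind₁_toMvPolynomial_eq_C_mul (prime_curveForm hn0)
    (isHomogeneous_curveForm n) fun v => (preserves_iff.1 hg v).2
  obtain ⟨u, rfl⟩ :=
    exists_diagonalUnits_eq_of_isDiag (isDiag_of_bind₁_curveForm hn g.isUnit hc)
  exact ⟨u, rfl, pow_eq_pow_of_bind₁_diagonalUnits_curveForm hn0 hc⟩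

lemma lin_curveForm_eq_range {n : ℕ} (hn : 4 ≤ n) :
    Lin (curveForm ℂ n) = ((QuotientGroup.mk' scalarSub).comp (curveSymmetry n)).range := by
  apply le_antisymm
  · rintro _ ⟨g, hg, rfl⟩
    obtain ⟨u, rfl, h0, h2⟩ := exists_diagonalUnits_eq_of_preserves_curveForm hn hg
    have hζ : u 0 / u 1 ∈ rootsOfUnity (n + 1) ℂ := by
      rw [mem_rootsOfUnity, div_pow, h0, div_self']
    have hξ : u 2 / u 1 ∈ rootsOfUnity n ℂ := by
      rw [mem_rootsOfUnity, div_pow, h2, div_self']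
    have hu : u = ![u 0 / u 1, 1, u 2 / u 1] * fun _ => u 1 := by
      ext i
      fin_cases i <;> simp
    have hmul : diagonalUnits u
        = curveSymmetry n (⟨_, hζ⟩, ⟨_, hξ⟩) * diagonalUnits fun _ => u 1 :=
      (congrArg diagonalUnits hu).trans (map_mul _ _ _)
    refine ⟨(⟨_, hζ⟩, ⟨_, hξ⟩), QuotientGroup.eq.2 ?_⟩
    rw [hmul, inv_mul_cancel_left]
    exact diagonalUnits_const_mem_scalarSub (u 1)
  · rintro _ ⟨p, rfl⟩
    refine ⟨curveSymmetry n p, preserves_iff.2 fun v => ?_, rfl⟩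
    rw [eval_curveSymmetry_mulVec]

theorem stmt19 (d : ℕ) (hd : 5 ≤ d) :
    IsCyclic (Lin (X 1 * X 2 ^ (d - 1) + X 0 ^ d + X 1 ^ d)) ∧
    Nat.card (Lin (X 1 * X 2 ^ (d - 1) + X 0 ^ d + X 1 ^ d)) = d * (d - 1) := by
  obtain ⟨n, rfl⟩ : ∃ n, d = n + 1 := ⟨d - 1, by lia⟩
  have : NeZero n := ⟨by lia⟩
  let e : rootsOfUnity (n + 1) ℂ × rootsOfUnity n ℂ ≃* Lin (curveForm ℂ n) :=
    (MonoidHom.ofInjective (injective_mk_comp_curveSymmetry n)).trans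
      (MulEquiv.subgroupCongr (lin_curveForm_eq_range (by lia)).symm)
  have hcyc : IsCyclic (rootsOfUnity (n + 1) ℂ × rootsOfUnity n ℂ) := by
    rw [Group.isCyclic_prod_iff, Complex.card_rootsOfUnity, Complex.card_rootsOfUnity]
    exact ⟨inferInstance, inferInstance, by simp⟩
  rw [Nat.add_sub_cancel]
  refine ⟨isCyclic_of_surjective e e.surjective, ?_⟩
  exact (Nat.card_congr e.symm.toEquiv).trans <| by
    rw [Nat.card_prod, Complex.card_rootsOfUnity, Complex.card_rootsOfUnity]
end
end
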